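/- arXiv:2006.04020 — 4 statements merged into one kernel-verified Lean document; each statement's English description precedes it below -/
import Mathlib

section
/- Fix α > 0 and T > 0, and let g : [0,T] → ℂ be continuous. Define u(x,t) := t^α (L_t^α g)(x) for x > 0 and 0 < t < T. Then u is twice continuously differentiable on (0,∞)×(0,T) and satisfies: ∂_t u(x,t) = x^{2(α-1)/α} ∂_{xx} u(x,t) for all x > 0, 0 < t < T; for every t ∈ (0,T), u(x,t) → t^α g(t) as x → 0⁺ and u(x,t) → 0 as x → ∞; and for every x > 0, u(x,t) → 0 as t → 0⁺. -/
open MeasureTheory Filter Set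

/-- The kernel `K_α(x,t) = (α^α/(2^α Γ(α/2))) x t^{-(α/2+1)} exp(-α² x^{2/α}/(4t))`. -/
noncomputable def Kker (α x t : ℝ) : ℝ :=
  (α ^ α / (2 ^ α * Real.Gamma (α / 2))) * x * t ^ (-(α / 2 + 1)) *
    Real.exp (-(α ^ 2) * x ^ (2 / α) / (4 * t))

/-- The transform `(L_t^α g)(x) = t^{-α} ∫_0^t K_α(x,t-τ) g(τ) τ^α dτ`. -/
noncomputable def Lt (α t : ℝ) (g : ℝ → ℂ) (x : ℝ) : ℂ :=
  ((t ^ (-α) : ℝ) : ℂ) *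
    ∫ τ in Set.Ioo (0 : ℝ) t, (Kker α x (t - τ) : ℂ) * g τ * ((τ ^ α : ℝ) : ℂ)


noncomputable def phi6 (γ w : ℝ) : ℝ := if 0 < w then w ^ (-γ) * Real.exp (-w⁻¹) else 0

lemma phi6_tendsto (γ : ℝ) : Tendsto (fun w : ℝ => w ^ (-γ) * Real.exp (-w⁻¹))
    (nhdsWithin 0 (Ioi 0)) (nhds 0) := by
  have h := (tendsto_rpow_mul_exp_neg_mul_atTop_nhds_zero γ 1 one_pos).comp
    (tendsto_inv_nhdsGT_zero (𝕜 := ℝ))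
  refine h.congr' ?_
  filter_upwards [self_mem_nhdsWithin] with w hw
  have hw : 0 < w := hw
  simp [Real.rpow_neg hw.le, Real.inv_rpow hw.le]

lemma phi6_pos (γ : ℝ) {w : ℝ} (hw : 0 < w) : phi6 γ w = w ^ (-γ) * Real.exp (-w⁻¹) := if_pos hw
lemma phi6_neg (γ : ℝ) {w : ℝ} (hw : w ≤ 0) : phi6 γ w = 0 := if_neg hw.not_gt

lemma phi6_hasDerivAt (γ w : ℝ) :
    HasDerivAt (phi6 γ) (-γ * phi6 (γ + 1) w + phi6 (γ + 2) w) w := by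
  rcases lt_trichotomy w 0 with hw | rfl | hw
  · rw [phi6_neg _ hw.le, phi6_neg _ hw.le]
    have : phi6 γ =ᶠ[nhds w] fun _ => 0 := by
      filter_upwards [Iio_mem_nhds hw] with y hy using phi6_neg _ (le_of_lt hy)
    simpa using (hasDerivAt_const w (0:ℝ)).congr_of_eventuallyEq this
  · rw [phi6_neg _ le_rfl, phi6_neg _ le_rfl]
    simp only [mul_zero, add_zero]
    rw [hasDerivAt_iff_tendsto_slope]
    have : Tendsto (fun w => phi6 (γ + 1) w) (nhds 0 ⊓ Filter.principal {0}ᶜ) (nhds 0) := by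
      have h2 : ({0}ᶜ : Set ℝ) = Iio 0 ∪ Ioi 0 := by ext x; simp
      rw [h2]
      change Tendsto _ (nhdsWithin 0 _) _
      rw [nhdsWithin_union, tendsto_sup]
      constructor
      · refine tendsto_const_nhds.congr' ?_
        filter_upwards [self_mem_nhdsWithin] with y hy using (phi6_neg _ (le_of_lt hy)).symm
      · refine (phi6_tendsto (γ + 1)).congr' ?_
        filter_upwards [self_mem_nhdsWithin] with y hy using (phi6_pos _ hy).symm
    refine this.congr' ?_
    change _ =ᶠ[nhdsWithin 0 _] _
    filter_upwards [self_mem_nhdsWithin] with y hy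
    have hy : y ≠ 0 := hy
    rw [slope_def_field, phi6_neg γ le_rfl]
    rcases lt_or_gt_of_ne hy with h | h
    · rw [phi6_neg _ h.le, phi6_neg _ h.le]; simp
    · rw [phi6_pos _ h, phi6_pos _ h, neg_add, Real.rpow_add h, Real.rpow_neg_one]
      field_simp
      simp only [sub_zero]
      ring
  · rw [phi6_pos _ hw, phi6_pos _ hw]
    have h1 := (Real.hasDerivAt_rpow_const (x := w) (p := -γ) (Or.inl hw.ne')).mul
      ((hasDerivAt_inv hw.ne').neg.exp)
    have : phi6 γ =ᶠ[nhds w] fun w => w ^ (-γ) * Real.exp (-w⁻¹) := by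
      filter_upwards [Ioi_mem_nhds hw] with y hy using phi6_pos _ hy
    refine (h1.congr_of_eventuallyEq this).congr_deriv ?_
    rw [neg_add, neg_add, Real.rpow_add hw, Real.rpow_add hw, Real.rpow_sub hw]
    simp [Real.rpow_neg hw.le]
    field_simp

lemma phi6_contDiff (n : ℕ) (γ : ℝ) : ContDiff ℝ n (phi6 γ) := by
  induction n generalizing γ with
  | zero => 
    simp only [Nat.cast_zero, contDiff_zero]
    exact continuous_iff_continuousAt.2 fun w => (phi6_hasDerivAt γ w).continuousAt
  | succ n ih =>
    rw [Nat.cast_succ, contDiff_succ_iff_deriv]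
    refine ⟨fun w => (phi6_hasDerivAt γ w).differentiableAt, by simp, ?_⟩
    have : deriv (phi6 γ) = fun w => (-γ * phi6 (γ + 1) w + phi6 (γ + 2) w) := 
      funext fun w => (phi6_hasDerivAt γ w).deriv
    rw [this]
    exact (contDiff_const.mul (ih _)).add (ih _)

lemma phi6_integral {s : ℝ} (hs : 0 < s) : Integrable (phi6 (s + 1)) ∧
    ∫ w, phi6 (s + 1) w = Real.Gamma s := by
  have e : phi6 (s + 1) = (Ioi (0:ℝ)).indicator (fun x => (|(-1:ℝ)| * x ^ ((-1:ℝ) - 1)) •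
      (fun x => Real.exp (-x) * x ^ (s - 1)) (x ^ (-1:ℝ))) := by
    ext w
    by_cases hw : 0 < w
    · rw [phi6_pos _ hw, indicator_of_mem (mem_Ioi.2 hw)]
      simp only [smul_eq_mul, abs_neg, abs_one, one_mul, ← Real.rpow_mul hw.le]
      rw [Real.rpow_neg_one, mul_left_comm, ← Real.rpow_add hw, mul_comm]
      congr 2; ring
    · rw [phi6_neg _ (not_lt.1 hw), indicator_of_notMem (by simpa using hw)]
  rw [e]
  constructor
  · rw [integrable_indicator_iff measurableSet_Ioi]
    exact (integrableOn_Ioi_comp_rpow_iff _ (by norm_num)).2 (Real.GammaIntegral_convergent hs)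
  · rw [integral_indicator measurableSet_Ioi, integral_comp_rpow_Ioi (fun x => Real.exp (-x) * x ^ (s - 1)) (p := -1) (by norm_num),
      Real.Gamma_eq_integral hs]

noncomputable def E6 (γ b s : ℝ) : ℝ := b ^ (-γ) * phi6 γ (s / b)

lemma E6_pos (γ : ℝ) {b s : ℝ} (hb : 0 < b) (hs : 0 < s) :
    E6 γ b s = s ^ (-γ) * Real.exp (-b / s) := by
  rw [E6, phi6_pos _ (div_pos hs hb), Real.div_rpow hs.le hb.le, inv_div]
  have := (Real.rpow_pos_of_pos hb (-γ)).ne'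
  field_simp

lemma E6_neg (γ : ℝ) {b s : ℝ} (hb : 0 < b) (hs : s ≤ 0) : E6 γ b s = 0 := by
  rw [E6, phi6_neg _ (div_nonpos_of_nonpos_of_nonneg hs hb.le), mul_zero]

lemma E6_hasDerivAt_b (γ : ℝ) {b : ℝ} (hb : 0 < b) (s : ℝ) :
    HasDerivAt (fun b => E6 γ b s) (-E6 (γ + 1) b s) b := by
  by_cases hs : 0 < s
  · have : (fun b => E6 γ b s) =ᶠ[nhds b] fun b => s ^ (-γ) * Real.exp (-b / s) := by
      filter_upwards [Ioi_mem_nhds hb] with y hy using E6_pos _ hy hs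
    refine HasDerivAt.congr_of_eventuallyEq ?_ this
    refine ((((hasDerivAt_id b).neg.div_const s).exp).const_mul (s ^ (-γ))).congr_deriv ?_
    rw [E6_pos _ hb hs, neg_add, Real.rpow_add hs, Real.rpow_neg_one]
    simp
    field_simp
  · have : (fun b => E6 γ b s) =ᶠ[nhds b] fun b => 0 := by
      filter_upwards [Ioi_mem_nhds hb] with y hy using E6_neg _ hy (not_lt.1 hs)
    refine HasDerivAt.congr_of_eventuallyEq ?_ this
    rw [E6_neg _ hb (not_lt.1 hs), neg_zero]
    exact hasDerivAt_const _ _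

lemma E6_hasDerivAt_s (γ : ℝ) {b : ℝ} (hb : 0 < b) (s : ℝ) :
    HasDerivAt (fun s => E6 γ b s) (-γ * E6 (γ + 1) b s + b * E6 (γ + 2) b s) s := by
  have h := ((phi6_hasDerivAt γ (s / b)).comp s ((hasDerivAt_id s).div_const b)).const_mul (b ^ (-γ))
  refine h.congr_deriv ?_
  rw [E6, E6, neg_add, neg_add, Real.rpow_add hb, Real.rpow_add hb, Real.rpow_neg_one,
    show (-2:ℝ) = -1 + -1 by norm_num, Real.rpow_add hb, Real.rpow_neg_one]
  field_simp

lemma E6_contDiffOn (n : ℕ) (γ : ℝ) :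
    ContDiffOn ℝ n (fun q : ℝ × ℝ => E6 γ q.1 q.2) (Ioi 0 ×ˢ univ) := by
  have h0 : ∀ q ∈ (Ioi (0:ℝ) ×ˢ (univ : Set ℝ)), q.1 ≠ 0 := fun q hq => (mem_Ioi.1 hq.1).ne'
  unfold E6
  refine ContDiffOn.mul ?_ ?_
  · exact contDiffOn_fst.rpow_const_of_ne h0
  · exact (phi6_contDiff n γ).comp_contDiffOn (contDiffOn_snd.div contDiffOn_fst h0)

lemma b6_contDiffOn (n : ℕ) (A β : ℝ) :
    ContDiffOn ℝ n (fun q : ℝ × ℝ => A * q.1 ^ β) (Ioi 0 ×ˢ univ) := by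
  have h0 : ∀ q ∈ (Ioi (0:ℝ) ×ˢ (univ : Set ℝ)), q.1 ≠ 0 := fun q hq => (mem_Ioi.1 hq.1).ne'
  exact contDiffOn_const.mul (contDiffOn_fst.rpow_const_of_ne h0)

lemma EA6_contDiffOn (n : ℕ) (γ A β : ℝ) (hA : 0 < A) :
    ContDiffOn ℝ n (fun q : ℝ × ℝ => E6 γ (A * q.1 ^ β) q.2) (Ioi 0 ×ˢ univ) := by
  refine (E6_contDiffOn n γ).comp (f := fun q : ℝ × ℝ => (A * q.1 ^ β, q.2))
    ((b6_contDiffOn n A β).prodMk contDiffOn_snd) ?_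
  intro q hq
  exact ⟨mul_pos hA (Real.rpow_pos_of_pos hq.1 _), mem_univ _⟩

lemma diff6 {T : ℝ} {f : ℝ → ℂ} (hf : Integrable f) (hfs : ∀ τ, τ ∉ Icc 0 T → f τ = 0)
    {H H' : ℝ → ℝ → ℝ} {p0 : ℝ} {S : Set ℝ} (hS : S ∈ nhds p0) (hSc : IsCompact S)
    (hH : ∀ p ∈ S, Continuous (H p))
    (hH' : ContinuousOn (fun q : ℝ × ℝ => H' q.1 q.2) (S ×ˢ univ))
    (hd : ∀ p ∈ S, ∀ τ, HasDerivAt (fun p => H p τ) (H' p τ) p) :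
    HasDerivAt (fun p => ∫ τ, (H p τ : ℂ) * f τ) (∫ τ, (H' p0 τ : ℂ) * f τ) p0 := by
  obtain ⟨C, hC⟩ := (hSc.prod (isCompact_Icc (a := 0) (b := T))).exists_bound_of_continuousOn
    (hH'.mono (prod_mono le_rfl (subset_univ _)))
  have hp0 : p0 ∈ S := mem_of_mem_nhds hS
  have hH'c : Continuous (H' p0) := by
    rw [← continuousOn_univ]
    exact hH'.comp (f := fun τ => (p0, τ)) (by fun_prop) (fun τ _ => ⟨hp0, mem_univ _⟩)
  have m : ∀ k : ℝ → ℝ, Continuous k → AEStronglyMeasurable (fun τ => (k τ : ℂ) * f τ) volume :=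
    fun k hk => (Complex.continuous_ofReal.comp hk).aestronglyMeasurable.mul hf.1
  refine (hasDerivAt_integral_of_dominated_loc_of_deriv_le (bound := fun τ => C * ‖f τ‖)
    (F := fun p τ => (H p τ : ℂ) * f τ) (F' := fun p τ => (H' p τ : ℂ) * f τ) hS ?_ ?_ (m _ hH'c) ?_ (hf.norm.const_mul C) ?_).2
  · filter_upwards [hS] with p hp using m _ (hH p hp)
  · obtain ⟨D, hD⟩ := (isCompact_Icc (a := 0) (b := T)).exists_bound_of_continuousOn
      (hH p0 hp0).continuousOn
    refine (hf.norm.const_mul D).mono' (m _ (hH p0 hp0)) (Eventually.of_forall fun τ => ?_)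
    by_cases hτ : τ ∈ Icc 0 T
    · rw [norm_mul, Complex.norm_real]
      exact mul_le_mul_of_nonneg_right (hD τ hτ) (norm_nonneg _)
    · simp [hfs τ hτ]
  · refine Eventually.of_forall fun τ p hp => ?_
    by_cases hτ : τ ∈ Icc 0 T
    · rw [norm_mul, Complex.norm_real]
      exact mul_le_mul_of_nonneg_right (hC (p, τ) ⟨hp, hτ⟩) (norm_nonneg _)
    · simp [hfs τ hτ]
  · refine Eventually.of_forall fun τ p hp => ?_
    exact ((hd p hp τ).ofReal_comp).mul_const (f τ)

noncomputable def K6 (α c x s : ℝ) : ℝ :=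
  c * x * E6 (α / 2 + 1) (α ^ 2 / 4 * x ^ (2 / α)) s

noncomputable def Kx6 (α c x s : ℝ) : ℝ :=
  c * (E6 (α / 2 + 1) (α ^ 2 / 4 * x ^ (2 / α)) s
    - α / 2 * x ^ (2 / α) * E6 (α / 2 + 2) (α ^ 2 / 4 * x ^ (2 / α)) s)

noncomputable def Kt6 (α c x s : ℝ) : ℝ :=
  c * x * (-(α / 2 + 1) * E6 (α / 2 + 2) (α ^ 2 / 4 * x ^ (2 / α)) s
    + α ^ 2 / 4 * x ^ (2 / α) * E6 (α / 2 + 3) (α ^ 2 / 4 * x ^ (2 / α)) s)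

noncomputable def Kxx6 (α c x s : ℝ) : ℝ := x ^ (2 / α - 2) * Kt6 α c x s

lemma A6_pos {α : ℝ} (hα : 0 < α) {x : ℝ} (hx : 0 < x) : 0 < α ^ 2 / 4 * x ^ (2 / α) := by
  positivity

lemma K6_contDiffOn {α : ℝ} (hα : 0 < α) (c : ℝ) (n : ℕ) :
    ContDiffOn ℝ n (fun q : ℝ × ℝ => K6 α c q.1 q.2) (Ioi 0 ×ˢ univ) :=
  (contDiffOn_const.mul contDiffOn_fst).mul (EA6_contDiffOn n _ _ _ (by positivity))

lemma Kx6_contDiffOn {α : ℝ} (hα : 0 < α) (c : ℝ) (n : ℕ) :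
    ContDiffOn ℝ n (fun q : ℝ × ℝ => Kx6 α c q.1 q.2) (Ioi 0 ×ˢ univ) :=
  contDiffOn_const.mul ((EA6_contDiffOn n _ _ _ (by positivity)).sub
    ((b6_contDiffOn n _ _).mul (EA6_contDiffOn n _ _ _ (by positivity))))

lemma Kt6_contDiffOn {α : ℝ} (hα : 0 < α) (c : ℝ) (n : ℕ) :
    ContDiffOn ℝ n (fun q : ℝ × ℝ => Kt6 α c q.1 q.2) (Ioi 0 ×ˢ univ) :=
  (contDiffOn_const.mul contDiffOn_fst).mul
    ((contDiffOn_const.mul (EA6_contDiffOn n _ _ _ (by positivity))).add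
    ((b6_contDiffOn n _ _).mul (EA6_contDiffOn n _ _ _ (by positivity))))

lemma Kxx6_contDiffOn {α : ℝ} (hα : 0 < α) (c : ℝ) (n : ℕ) :
    ContDiffOn ℝ n (fun q : ℝ × ℝ => Kxx6 α c q.1 q.2) (Ioi 0 ×ˢ univ) :=
  (contDiffOn_fst.rpow_const_of_ne fun _ hq => (mem_Ioi.1 hq.1).ne').mul (Kt6_contDiffOn hα c n)

lemma b6_hasDerivAt {α : ℝ} (hα : 0 < α) {x : ℝ} (hx : 0 < x) :
    HasDerivAt (fun x : ℝ => α ^ 2 / 4 * x ^ (2 / α)) (α / 2 * (x ^ (2 / α) / x)) x := by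
  refine ((Real.hasDerivAt_rpow_const (p := 2 / α) (Or.inl hx.ne')).const_mul
    (α ^ 2 / 4)).congr_deriv ?_
  rw [Real.rpow_sub_one hx.ne']
  field_simp
  norm_num

lemma EA6_hasDerivAt {α : ℝ} (hα : 0 < α) (γ : ℝ) {x : ℝ} (hx : 0 < x) (s : ℝ) :
    HasDerivAt (fun x => E6 γ (α ^ 2 / 4 * x ^ (2 / α)) s)
      (-E6 (γ + 1) (α ^ 2 / 4 * x ^ (2 / α)) s * (α / 2 * (x ^ (2 / α) / x))) x :=
  HasDerivAt.comp (h₂ := fun b => E6 γ b s) x (E6_hasDerivAt_b γ (A6_pos hα hx) s) (b6_hasDerivAt hα hx)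

lemma K6_hasDerivAt_x {α : ℝ} (hα : 0 < α) (c : ℝ) {x : ℝ} (hx : 0 < x) (s : ℝ) :
    HasDerivAt (fun x => K6 α c x s) (Kx6 α c x s) x := by
  refine (((hasDerivAt_id x).const_mul c).mul (EA6_hasDerivAt hα (α / 2 + 1) hx s)).congr_deriv ?_
  rw [show α / 2 + 1 + 1 = α / 2 + 2 by ring, Kx6]
  simp only [id]
  field_simp
  ring

lemma Kx6_hasDerivAt_x {α : ℝ} (hα : 0 < α) (c : ℝ) {x : ℝ} (hx : 0 < x) (s : ℝ) :
    HasDerivAt (fun x => Kx6 α c x s) (Kxx6 α c x s) x := by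
  have h1 : HasDerivAt (fun x : ℝ => α / 2 * x ^ (2 / α)) (x ^ (2 / α) / x) x := by
    refine ((Real.hasDerivAt_rpow_const (p := 2 / α) (Or.inl hx.ne')).const_mul
      (α / 2)).congr_deriv ?_
    rw [Real.rpow_sub_one hx.ne']
    field_simp
  refine (((EA6_hasDerivAt hα (α / 2 + 1) hx s).sub
    (h1.mul (EA6_hasDerivAt hα (α / 2 + 2) hx s))).const_mul c).congr_deriv ?_
  rw [show α / 2 + 1 + 1 = α / 2 + 2 by ring, show α / 2 + 2 + 1 = α / 2 + 3 by ring, Kxx6, Kt6,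
    Real.rpow_sub hx, Real.rpow_two]
  field_simp
  ring

lemma K6_hasDerivAt_s {α : ℝ} (hα : 0 < α) (c : ℝ) {x : ℝ} (hx : 0 < x) (s : ℝ) :
    HasDerivAt (fun s => K6 α c x s) (Kt6 α c x s) s := by
  refine ((E6_hasDerivAt_s (α / 2 + 1) (A6_pos hα hx) s).const_mul (c * x)).congr_deriv ?_
  rw [show α / 2 + 1 + 1 = α / 2 + 2 by ring, show α / 2 + 1 + 2 = α / 2 + 3 by ring, Kt6]

lemma Kker_eq6 {α x s : ℝ} (hα : 0 < α) (hx : 0 < x) (hs : 0 < s) :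
    Kker α x s = K6 α (α ^ α / (2 ^ α * Real.Gamma (α / 2))) x s := by
  rw [Kker, K6, E6_pos _ (A6_pos hα hx) hs, ← mul_assoc]
  congr 2
  field_simp

noncomputable def h6 (α T : ℝ) (g : ℝ → ℂ) : ℝ → ℂ :=
  (Ioo 0 T).indicator fun τ => g τ * ((τ ^ α : ℝ) : ℂ)

lemma h6_cont {α T : ℝ} (hα : 0 < α) {g : ℝ → ℂ} (hg : ContinuousOn g (Icc 0 T)) :
    ContinuousOn (fun τ => g τ * ((τ ^ α : ℝ) : ℂ)) (Icc 0 T) :=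
  hg.mul (Complex.continuous_ofReal.comp (Real.continuous_rpow_const hα.le)).continuousOn

lemma h6_integrable {α T : ℝ} (hα : 0 < α) {g : ℝ → ℂ} (hg : ContinuousOn g (Icc 0 T)) :
    Integrable (h6 α T g) :=
  (integrable_indicator_iff measurableSet_Ioo).2
    (((h6_cont hα hg).integrableOn_Icc).mono_set Ioo_subset_Icc_self)

lemma h6_bound {α T : ℝ} (hα : 0 < α) {g : ℝ → ℂ} (hg : ContinuousOn g (Icc 0 T)) :
    ∃ M, ∀ τ, ‖h6 α T g τ‖ ≤ M := by
  obtain ⟨C, hC⟩ := isCompact_Icc.exists_bound_of_continuousOn (h6_cont hα hg)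
  refine ⟨max C 0, fun τ => ?_⟩
  by_cases hτ : τ ∈ Ioo 0 T
  · rw [h6, indicator_of_mem hτ]
    exact (hC τ (Ioo_subset_Icc_self hτ)).trans (le_max_left _ _)
  · rw [h6, indicator_of_notMem hτ, norm_zero]
    exact le_max_right _ _

lemma rep6 {α T x t : ℝ} (hα : 0 < α) (g : ℝ → ℂ) (hx : 0 < x) (ht : 0 < t) (htT : t < T) :
    ((t ^ α : ℝ) : ℂ) * Lt α t g x =
      ∫ τ, (K6 α (α ^ α / (2 ^ α * Real.Gamma (α / 2))) x (t - τ) : ℂ) * h6 α T g τ := by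
  rw [Lt, ← mul_assoc, ← Complex.ofReal_mul, ← Real.rpow_add ht, add_neg_cancel, Real.rpow_zero,
    Complex.ofReal_one, one_mul, ← integral_indicator measurableSet_Ioo]
  congr 1
  ext τ
  by_cases h1 : τ ∈ Ioo 0 t
  · have h2 : τ ∈ Ioo 0 T := ⟨h1.1, h1.2.trans htT⟩
    rw [indicator_of_mem h1, h6, indicator_of_mem h2, Kker_eq6 hα hx (sub_pos.2 h1.2), mul_assoc]
  · rw [indicator_of_notMem h1]
    by_cases h3 : 0 < τ
    · have h4 : t - τ ≤ 0 := by
        have : ¬ τ < t := fun h => h1 ⟨h3, h⟩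
        linarith
      rw [K6, E6_neg _ (A6_pos hα hx) h4]
      simp
    · rw [h6, indicator_of_notMem (fun h => h3 h.1), mul_zero]

lemma const6 {α x : ℝ} (hα : 0 < α) (hx : 0 < x) (w : ℝ) :
    (α ^ 2 / 4 * x ^ (2 / α)) * K6 α (α ^ α / (2 ^ α * Real.Gamma (α / 2))) x
      ((α ^ 2 / 4 * x ^ (2 / α)) * w) = phi6 (α / 2 + 1) w / Real.Gamma (α / 2) := by
  have hb := A6_pos hα hx
  have hG : 0 < Real.Gamma (α / 2) := Real.Gamma_pos_of_pos (by positivity)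
  have key : (α ^ 2 / 4 * x ^ (2 / α)) ^ (α / 2) = α ^ α / 2 ^ α * x := by
    rw [Real.mul_rpow (by positivity) (by positivity), ← Real.rpow_mul hx.le,
      show 2 / α * (α / 2) = 1 by field_simp, Real.rpow_one, show α ^ 2 / 4 = (α / 2) ^ (2:ℝ) by
        rw [Real.rpow_two]; ring, ← Real.rpow_mul (by positivity),
      show 2 * (α / 2) = α by ring, Real.div_rpow hα.le (by norm_num)]
  rw [K6, E6, mul_div_cancel_left₀ _ hb.ne', neg_add, Real.rpow_add hb, Real.rpow_neg_one,
    Real.rpow_neg hb.le, key]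
  have : (0:ℝ) < α ^ α := by positivity
  have : (0:ℝ) < 2 ^ α := by positivity
  generalize α ^ 2 / 4 * x ^ (2 / α) = b at *
  field_simp

lemma rep6' {α T x t : ℝ} (hα : 0 < α) (g : ℝ → ℂ) (hx : 0 < x) (ht : 0 < t) (htT : t < T) :
    ((t ^ α : ℝ) : ℂ) * Lt α t g x =
      ∫ w, ((phi6 (α / 2 + 1) w / Real.Gamma (α / 2) : ℝ) : ℂ) *
        h6 α T g (t - (α ^ 2 / 4 * x ^ (2 / α)) * w) := by
  have hb := A6_pos hα hx
  rw [rep6 hα g hx ht htT, ← integral_sub_left_eq_self _ volume t]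
  simp only [sub_sub_cancel]
  have := Measure.integral_comp_mul_left (fun s =>
    (K6 α (α ^ α / (2 ^ α * Real.Gamma (α / 2))) x s : ℂ) * h6 α T g (t - s))
    (α ^ 2 / 4 * x ^ (2 / α))
  rw [abs_of_pos (inv_pos.2 hb), eq_inv_smul_iff₀ hb.ne', ← integral_smul] at this
  rw [← this]
  congr 1
  ext w
  rw [← const6 hα hx w, Complex.real_smul]
  push_cast
  ring

lemma lim6 {α T : ℝ} (hα : 0 < α) {g : ℝ → ℂ} (hg : ContinuousOn g (Icc 0 T))
    {l : Filter ℝ} [l.IsCountablyGenerated] (t b : ℝ → ℝ) (hb : ∀ᶠ i in l, 0 < b i) (L : ℂ)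
    (h : ∀ w : ℝ, 0 < w → Tendsto (fun i => h6 α T g (t i - b i * w)) l (nhds L)) :
    Tendsto (fun i => ∫ w, ((phi6 (α / 2 + 1) w / Real.Gamma (α / 2) : ℝ) : ℂ) *
        h6 α T g (t i - b i * w)) l (nhds L) := by
  obtain ⟨M, hM⟩ := h6_bound hα hg
  have hG : 0 < Real.Gamma (α / 2) := Real.Gamma_pos_of_pos (by positivity)
  obtain ⟨hi, hv⟩ := phi6_integral (s := α / 2) (by positivity)
  have hL : L = ∫ w, ((phi6 (α / 2 + 1) w / Real.Gamma (α / 2) : ℝ) : ℂ) * L := by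
    rw [integral_mul_const, integral_complex_ofReal, integral_div, hv, div_self hG.ne']
    simp
  have hc : Continuous (phi6 (α / 2 + 1)) := (phi6_contDiff 0 _).continuous
  rw [hL]
  refine tendsto_integral_filter_of_dominated_convergence
    (fun w => ‖phi6 (α / 2 + 1) w / Real.Gamma (α / 2)‖ * M) ?_ ?_ ?_ ?_
  · filter_upwards [hb] with i hbi
    refine (Complex.continuous_ofReal.comp (hc.div_const _)).aestronglyMeasurable.mul ?_
    have := (((h6_integrable hα hg).comp_sub_left (t i)).comp_mul_left' hbi.ne').1
    exact this
  · refine Eventually.of_forall fun i => Eventually.of_forall fun w => ?_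
    rw [norm_mul, Complex.norm_real]
    exact mul_le_mul_of_nonneg_left (hM _) (norm_nonneg _)
  · exact (hi.div_const _).norm.mul_const _
  · refine Eventually.of_forall fun w => ?_
    by_cases hw : 0 < w
    · exact (h w hw).const_mul _
    · simp [phi6_neg _ (not_lt.1 hw), tendsto_const_nhds]

open scoped Convolution in
lemma contDiff6 {α T : ℝ} (hα : 0 < α) (hT : 0 < T) {g : ℝ → ℂ} (hg : ContinuousOn g (Icc 0 T))
    (c : ℝ) :
    ContDiffOn ℝ 2 (fun p : ℝ × ℝ => ∫ τ, (K6 α c p.1 (p.2 - τ) : ℂ) * h6 α T g τ)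
      (Ioi 0 ×ˢ Ioo 0 T) := by
  let χ : ContDiffBump (0:ℝ) := ⟨T, 2 * T, hT, by linarith⟩
  have h1 : ContDiffOn ℝ ((2 : ℕ∞) : WithTop ℕ∞)
      (fun q : ℝ × ℝ => ((h6 α T g) ⋆[(ContinuousLinearMap.lsmul ℝ ℝ).flip, volume]
        (fun s => χ s * K6 α c q.1 s)) q.2) (Ioi 0 ×ˢ univ) := by
    refine contDiffOn_convolution_right_with_param (g := fun x s => χ s * K6 α c x s)
      (k := Metric.closedBall 0 (2 * T)) _ isOpen_Ioi
      (isCompact_closedBall _ _) ?_ (h6_integrable hα hg).locallyIntegrable ?_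
    · intro x s _ hs
      have : χ s = 0 := χ.zero_of_le_dist (by
        simp only [Metric.mem_closedBall, not_le] at hs; exact hs.le)
      simp [this]
    · exact ((χ.contDiff.comp contDiff_snd).contDiffOn).mul (K6_contDiffOn hα c 2)
  refine (h1.mono (prod_mono le_rfl (subset_univ _))).congr ?_
  rintro ⟨x, t⟩ ⟨hx, ht⟩
  simp only [convolution]
  congr 1
  ext τ
  by_cases hτ : τ ∈ Ioo 0 T
  · have : χ (t - τ) = 1 := χ.one_of_mem_closedBall (by
      simp only [Metric.mem_closedBall, dist_zero_right, Real.norm_eq_abs]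
      change |t - τ| ≤ T
      rw [abs_le]
      simp only [mem_Ioo] at ht hτ
      constructor <;> linarith)
    simp [this]
  · simp [h6, indicator_of_notMem hτ]

theorem stmt6 (α T : ℝ) (hα : 0 < α) (hT : 0 < T)
    (g : ℝ → ℂ) (hg : ContinuousOn g (Set.Icc 0 T))
    (u : ℝ → ℝ → ℂ) (hu : ∀ x t : ℝ, u x t = ((t ^ α : ℝ) : ℂ) * Lt α t g x) :
    ContDiffOn ℝ 2 (fun p : ℝ × ℝ => u p.1 p.2) (Set.Ioi 0 ×ˢ Set.Ioo 0 T) ∧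
    (∀ x t : ℝ, 0 < x → 0 < t → t < T →
      deriv (fun s => u x s) t =
        (x ^ (2 * (α - 1) / α) : ℝ) * iteratedDeriv 2 (fun y => u y t) x) ∧
    (∀ t : ℝ, 0 < t → t < T →
      Tendsto (fun x => u x t) (nhdsWithin 0 (Set.Ioi 0))
        (nhds (((t ^ α : ℝ) : ℂ) * g t))) ∧
    (∀ t : ℝ, 0 < t → t < T → Tendsto (fun x => u x t) atTop (nhds 0)) ∧
    (∀ x : ℝ, 0 < x →
      Tendsto (fun t => u x t) (nhdsWithin 0 (Set.Ioi 0)) (nhds 0)) := by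
  
  set c := α ^ α / (2 ^ α * Real.Gamma (α / 2)) with hc
  have R : ∀ x t : ℝ, 0 < x → 0 < t → t < T →
      u x t = ∫ τ, (K6 α c x (t - τ) : ℂ) * h6 α T g τ := fun x t hx ht htT => by
    rw [hu, rep6 hα g hx ht htT]
  have R' : ∀ x t : ℝ, 0 < x → 0 < t → t < T →
      u x t = ∫ w, ((phi6 (α / 2 + 1) w / Real.Gamma (α / 2) : ℝ) : ℂ) *
        h6 α T g (t - (α ^ 2 / 4 * x ^ (2 / α)) * w) := fun x t hx ht htT => by
    rw [hu, rep6' hα g hx ht htT]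
  have hf := h6_integrable hα hg
  have hfs : ∀ τ, τ ∉ Icc 0 T → h6 α T g τ = 0 := fun τ hτ =>
    indicator_of_notMem (fun h => hτ (Ioo_subset_Icc_self h)) _
  have hneg : ∀ τ, τ ≤ 0 → h6 α T g τ = 0 := fun τ hτ =>
    indicator_of_notMem (fun h => absurd h.1 (not_lt.2 hτ)) _
  -- derivatives
  have hcont : ∀ F : ℝ → ℝ → ℝ, ContDiffOn ℝ (1:ℕ) (fun q : ℝ × ℝ => F q.1 q.2) (Ioi 0 ×ˢ univ) →
      ∀ x t : ℝ, 0 < x → Continuous fun τ => F x (t - τ) := fun F hF x t hx => by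
    rw [← continuousOn_univ]
    exact hF.continuousOn.comp (f := fun τ => (x, t - τ)) (by fun_prop)
      (fun τ _ => ⟨hx, mem_univ _⟩)
  have hdx : ∀ F F' : ℝ → ℝ → ℝ,
      ContDiffOn ℝ (1:ℕ) (fun q : ℝ × ℝ => F q.1 q.2) (Ioi 0 ×ˢ univ) →
      ContDiffOn ℝ (1:ℕ) (fun q : ℝ × ℝ => F' q.1 q.2) (Ioi 0 ×ˢ univ) →
      (∀ x : ℝ, 0 < x → ∀ s, HasDerivAt (fun x => F x s) (F' x s) x) →
      ∀ x t : ℝ, 0 < x → HasDerivAt (fun x => ∫ τ, (F x (t - τ) : ℂ) * h6 α T g τ)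
        (∫ τ, (F' x (t - τ) : ℂ) * h6 α T g τ) x := fun F F' hF hF' hd x t hx => by
    have hS : ∀ p ∈ Icc (x / 2) (2 * x), 0 < p := fun p hp => by linarith [hp.1]
    refine diff6 (H := fun x τ => F x (t - τ)) (H' := fun x τ => F' x (t - τ)) hf hfs
      (S := Icc (x / 2) (2 * x)) (Icc_mem_nhds (by linarith) (by linarith))
      isCompact_Icc (fun p hp => hcont F hF p t (hS p hp)) ?_ (fun p hp τ => hd p (hS p hp) _)
    exact hF'.continuousOn.comp (f := fun q : ℝ × ℝ => (q.1, t - q.2)) (by fun_prop)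
      (fun q hq => ⟨hS _ hq.1, mem_univ _⟩)
  have hdt : ∀ x t : ℝ, 0 < x → HasDerivAt (fun t => ∫ τ, (K6 α c x (t - τ) : ℂ) * h6 α T g τ)
        (∫ τ, (Kt6 α c x (t - τ) : ℂ) * h6 α T g τ) t := fun x t hx => by
    refine diff6 (H := fun t τ => K6 α c x (t - τ)) (H' := fun t τ => Kt6 α c x (t - τ)) hf hfs
      (S := Icc (t - 1) (t + 1)) (Icc_mem_nhds (by linarith) (by linarith))
      isCompact_Icc (fun p hp => hcont _ (K6_contDiffOn hα c 1) x p hx) ?_ (fun p hp τ => ?_)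
    · exact (Kt6_contDiffOn hα c 1).continuousOn.comp (f := fun q : ℝ × ℝ => (x, q.1 - q.2))
        (by fun_prop) (fun q hq => ⟨hx, mem_univ _⟩)
    · exact (K6_hasDerivAt_s hα c hx (p - τ)).comp_sub_const p τ
  refine ⟨?_, ?_, ?_, ?_, ?_⟩
  · refine (contDiff6 hα hT hg c).congr ?_
    rintro ⟨x, t⟩ ⟨hx, ht⟩
    exact R x t hx ht.1 ht.2
  · intro x t hx ht htT
    have e1 : (fun s => u x s) =ᶠ[nhds t] fun t => ∫ τ, (K6 α c x (t - τ) : ℂ) * h6 α T g τ := by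
      filter_upwards [Ioo_mem_nhds ht htT] with s hs using R x s hx hs.1 hs.2
    rw [e1.deriv_eq, (hdt x t hx).deriv]
    have e2 : deriv (fun y => u y t) =ᶠ[nhds x]
        fun y => ∫ τ, (Kx6 α c y (t - τ) : ℂ) * h6 α T g τ := by
      filter_upwards [Ioi_mem_nhds hx] with y hy
      have e3 : (fun y => u y t) =ᶠ[nhds y] fun y => ∫ τ, (K6 α c y (t - τ) : ℂ) * h6 α T g τ := by
        filter_upwards [Ioi_mem_nhds hy] with z hz using R z t hz ht htT
      rw [e3.deriv_eq]
      exact (hdx _ _ (K6_contDiffOn hα c 1) (Kx6_contDiffOn hα c 1)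
        (fun x hx s => K6_hasDerivAt_x hα c hx s) y t hy).deriv
    rw [iteratedDeriv_succ, iteratedDeriv_one, e2.deriv_eq,
      (hdx _ _ (Kx6_contDiffOn hα c 1) (Kxx6_contDiffOn hα c 1)
        (fun x hx s => Kx6_hasDerivAt_x hα c hx s) x t hx).deriv, ← integral_const_mul]
    congr 1
    ext τ
    rw [← mul_assoc, ← Complex.ofReal_mul, Kxx6, ← mul_assoc, ← Real.rpow_add hx,
      show 2 * (α - 1) / α + (2 / α - 2) = 0 by field_simp; ring, Real.rpow_zero, one_mul]
  · intro t ht htT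
    refine ((lim6 hα hg (fun _ => t) (fun x => α ^ 2 / 4 * x ^ (2 / α)) ?_ _ ?_)).congr' (by
      filter_upwards [self_mem_nhdsWithin] with x hx using (R' x t hx ht htT).symm)
    · filter_upwards [self_mem_nhdsWithin] with x hx using A6_pos hα hx
    · intro w hw
      have h1 : ContinuousAt (h6 α T g) t := by
        have : h6 α T g =ᶠ[nhds t] fun τ => g τ * ((τ ^ α : ℝ) : ℂ) := by
          filter_upwards [Ioo_mem_nhds ht htT] with s hs using indicator_of_mem hs _
        exact ((h6_cont hα hg).continuousAt (Icc_mem_nhds ht htT)).congr this.symm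
      have h2 : h6 α T g t = ((t ^ α : ℝ) : ℂ) * g t := by
        rw [h6, indicator_of_mem (mem_Ioo.2 ⟨ht, htT⟩), mul_comm]
      rw [← h2]
      refine h1.tendsto.comp ?_
      have h3 : ContinuousAt (fun x : ℝ => t - α ^ 2 / 4 * x ^ (2 / α) * w) 0 :=
        (continuous_const.sub ((continuous_const.mul
          (Real.continuous_rpow_const (by positivity))).mul continuous_const)).continuousAt
      have h4 := h3.tendsto
      rw [Real.zero_rpow (by positivity)] at h4
      simp only [mul_zero, zero_mul, sub_zero] at h4
      exact h4.mono_left nhdsWithin_le_nhds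
  · intro t ht htT
    refine ((lim6 hα hg (fun _ => t) (fun x => α ^ 2 / 4 * x ^ (2 / α)) ?_ _ ?_)).congr' (by
      filter_upwards [eventually_gt_atTop 0] with x hx using (R' x t hx ht htT).symm)
    · filter_upwards [eventually_gt_atTop 0] with x hx using A6_pos hα hx
    · intro w hw
      have h1 : Tendsto (fun x : ℝ => α ^ 2 / 4 * x ^ (2 / α) * w) atTop atTop :=
        ((tendsto_rpow_atTop (by positivity)).const_mul_atTop (by positivity)).atTop_mul_const hw
      refine tendsto_const_nhds.congr' ?_
      filter_upwards [h1.eventually_ge_atTop t] with x hx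
      exact (hneg _ (by linarith)).symm
  · intro x hx
    refine ((lim6 hα hg (fun t => t) (fun _ => α ^ 2 / 4 * x ^ (2 / α)) ?_ _ ?_)).congr' (by
      filter_upwards [Ioo_mem_nhdsGT hT] with t ht using (R' x t hx ht.1 ht.2).symm)
    · exact Eventually.of_forall fun _ => A6_pos hα hx
    · intro w hw
      refine tendsto_const_nhds.congr' ?_
      filter_upwards [Ioo_mem_nhdsGT (mul_pos (A6_pos hα hx) hw)] with t ht
      exact (hneg _ (by linarith [ht.2])).symm
end

section
/- Fix α > 0, T > 0, and an integer m ≥ 0, and let g : [0,T] → ℂ be m times continuously differentiable. Let D_x^α denote the operator sending a twice differentiable function w of x > 0 to (D_x^α w)(x) := x^{2(α-1)/α} w''(x). Then for every t ∈ (0,T), the m-fold iterate of D_x^α applied to x ↦ (T_t^α g)(x) satisfies lim_{x→0⁺} ((D_x^α)^m (T_t^α g))(x) = g^{(m)}(t), where g^{(m)} denotes the m-th derivative of g. -/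
open MeasureTheory Filter Set

/-- The transform `(T_t^α g)(x) = ∫_0^t K_α(x,t-τ) g(τ) dτ`. -/
noncomputable def Tt (α t : ℝ) (g : ℝ → ℂ) (x : ℝ) : ℂ :=
  ∫ τ in Set.Ioo (0 : ℝ) t, (Kker α x (t - τ) : ℂ) * g τ

/-- The degenerate elliptic operator `(D_x^α w)(x) = x^{2(α-1)/α} w''(x)`
for complex-valued functions of a real variable. -/
noncomputable def DxC (α : ℝ) (w : ℝ → ℂ) : ℝ → ℂ :=
  fun x => ((x ^ (2 * (α - 1) / α) : ℝ) : ℂ) * iteratedDeriv 2 w x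

/-- The basic profile `s^(-ν) exp(-a/s)`. -/
noncomputable def Ee (ν a s : ℝ) : ℝ := s ^ (-ν) * Real.exp (-a / s)

lemma Ee_cont {ν a : ℝ} (hν : 0 < ν) (ha : 0 < a) : ContinuousOn (Ee ν a) (Ici 0) := by
  intro s hs
  rcases eq_or_lt_of_le (show (0:ℝ) ≤ s from hs) with h | h
  · subst h
    rw [← Ioi_insert, continuousWithinAt_insert_self]
    unfold ContinuousWithinAt
    have h0 : Ee ν a 0 = 0 := by
      unfold Ee; rw [Real.zero_rpow (by linarith)]; simp
    rw [h0]
    have := (tendsto_rpow_mul_exp_neg_mul_atTop_nhds_zero ν a ha).comp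
      (tendsto_inv_nhdsGT_zero (𝕜 := ℝ))
    refine this.congr' ?_
    filter_upwards [self_mem_nhdsWithin] with s hs
    have hs : (0:ℝ) < s := hs
    simp only [Function.comp, Ee]
    rw [Real.inv_rpow hs.le, Real.rpow_neg hs.le, div_eq_mul_inv]
  · apply ContinuousAt.continuousWithinAt
    unfold Ee
    apply ContinuousAt.mul
    · exact Real.continuousAt_rpow_const _ _ (Or.inl h.ne')
    · exact Real.continuous_exp.continuousAt.comp (continuousAt_const.div continuousAt_id h.ne')

lemma Ee_nonneg {ν a s : ℝ} (hs : 0 ≤ s) : 0 ≤ Ee ν a s := by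
  unfold Ee; positivity

lemma Ee_succ {ν a s : ℝ} (hs : 0 < s) : Ee (ν + 1) a s = Ee ν a s / s := by
  unfold Ee
  rw [neg_add, ← sub_eq_add_neg, Real.rpow_sub_one hs.ne']; ring

lemma Ee_hasDerivAt {ν a s : ℝ} (hs : 0 < s) :
    HasDerivAt (Ee ν a) (-ν * Ee (ν + 1) a s + a * Ee (ν + 2) a s) s := by
  have h1 : HasDerivAt (fun s : ℝ => s ^ (-ν)) (-ν * s ^ (-ν - 1)) s :=
    Real.hasDerivAt_rpow_const (Or.inl hs.ne')
  have h2 : HasDerivAt (fun s : ℝ => Real.exp (-a / s)) (Real.exp (-a / s) * (a / s ^ 2)) s := by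
    have := ((hasDerivAt_inv hs.ne').const_mul (-a)).exp
    simp only [← div_eq_mul_inv] at this
    refine this.congr_deriv ?_
    ring
  have h3 : HasDerivAt (Ee ν a) _ s := h1.mul h2
  refine h3.congr_deriv ?_
  rw [show ν + 2 = (ν + 1) + 1 by ring, Ee_succ hs, Ee_succ hs, Ee_succ hs, Real.rpow_sub_one hs.ne']
  unfold Ee
  field_simp

lemma Ee_hasDerivAt_y {ν k y s : ℝ} (hs : 0 < s) :
    HasDerivAt (fun y => Ee ν (k * y) s) (-k * Ee (ν + 1) (k * y) s) y := by
  have : HasDerivAt (fun y : ℝ => -(k * y) / s) (-k / s) y := by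
    have := (((hasDerivAt_id y).const_mul k).neg).div_const s
    simpa using this
  have := (this.exp).const_mul (s ^ (-ν))
  rw [Ee_succ hs]
  refine HasDerivAt.congr_deriv (f := fun y => Ee ν (k * y) s) this ?_
  unfold Ee
  ring

noncomputable def II (k ν t : ℝ) (h : ℝ → ℂ) (y : ℝ) : ℂ :=
  ∫ s in (0:ℝ)..t, (Ee ν (k * y) s : ℂ) * h (t - s)

lemma sub_cont {t : ℝ} {h : ℝ → ℂ} (hc : ContinuousOn h (Icc 0 t)) :
    ContinuousOn (fun s => h (t - s)) (Icc 0 t) := by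
  refine hc.comp (by fun_prop) ?_
  intro s hs
  exact ⟨by linarith [hs.2], by linarith [hs.1]⟩

lemma Eh_cont {ν a t : ℝ} {h : ℝ → ℂ} (hν : 0 < ν) (ha : 0 < a)
    (hc : ContinuousOn h (Icc 0 t)) :
    ContinuousOn (fun s => (Ee ν a s : ℂ) * h (t - s)) (Icc 0 t) :=
  (Complex.continuous_ofReal.comp_continuousOn
    ((Ee_cont hν ha).mono Icc_subset_Ici_self)).mul (sub_cont hc)

lemma Eh_int {ν a t : ℝ} {h : ℝ → ℂ} (hν : 0 < ν) (ha : 0 < a) (ht : 0 < t)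
    (hc : ContinuousOn h (Icc 0 t)) :
    IntervalIntegrable (fun s => (Ee ν a s : ℂ) * h (t - s)) volume 0 t :=
  (Eh_cont hν ha hc).intervalIntegrable_of_Icc ht.le

lemma II_hasDerivAt {k ν t y : ℝ} {h : ℝ → ℂ} (hk : 0 < k) (hν : 0 < ν) (ht : 0 < t) (hy : 0 < y)
    (hc : ContinuousOn h (Icc 0 t)) :
    HasDerivAt (II k ν t h) (-k * II k (ν + 1) t h y) y := by
  have key := intervalIntegral.hasDerivAt_integral_of_dominated_loc_of_deriv_le
    (𝕜 := ℝ) (μ := volume) (a := 0) (b := t) (x₀ := y) (s := Ioi (y / 2))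
    (F := fun y s => (Ee ν (k * y) s : ℂ) * h (t - s))
    (F' := fun y s => ((-k * Ee (ν + 1) (k * y) s : ℝ) : ℂ) * h (t - s))
    (bound := fun s => k * (Ee (ν + 1) (k * (y / 2)) s * ‖h (t - s)‖))
    (Ioi_mem_nhds (by linarith)) ?_ ?_ ?_ ?_ ?_ ?_
  · refine key.2.congr_deriv ?_
    unfold II
    rw [← intervalIntegral.integral_const_mul]
    congr 1
    ext s
    push_cast
    ring
  · filter_upwards [Ioi_mem_nhds hy] with z hz
    have hz : 0 < z := hz
    exact (Eh_int hν (by positivity) ht hc).aestronglyMeasurable_restrict_uIoc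
  · exact Eh_int hν (by positivity) ht hc
  · have := (Eh_int (ν := ν + 1) (a := k * y) (by positivity) (by positivity) ht hc).const_mul (-k : ℂ)
    refine (this.congr ?_).aestronglyMeasurable_restrict_uIoc
    intro s _
    push_cast
    ring
  · refine Eventually.of_forall fun s hs z hz => ?_
    rw [uIoc_of_le ht.le] at hs
    have hs0 := hs.1
    have hz : y / 2 < z := hz
    rw [norm_mul, Complex.norm_real, norm_mul, norm_neg, Real.norm_of_nonneg hk.le,
      Real.norm_of_nonneg (Ee_nonneg hs0.le), mul_assoc]
    unfold Ee
    gcongr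
  · apply IntervalIntegrable.const_mul
    apply ContinuousOn.intervalIntegrable_of_Icc ht.le
    exact ((Ee_cont (by positivity) (by positivity)).mono Icc_subset_Ici_self).mul (sub_cont hc).norm
  · refine Eventually.of_forall fun s hs z hz => ?_
    rw [uIoc_of_le ht.le] at hs
    exact ((Ee_hasDerivAt_y hs.1).ofReal_comp).mul_const _

lemma II_parts {k ν t y : ℝ} {h h' : ℝ → ℂ} (hk : 0 < k) (hν : 0 < ν) (ht : 0 < t) (hy : 0 < y)
    (hc : ContinuousOn h (Icc 0 t)) (hc' : ContinuousOn h' (Icc 0 t))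
    (hd : ∀ s ∈ Ioo 0 t, HasDerivAt h (h' s) s) :
    -ν * II k (ν + 1) t h y + k * y * II k (ν + 2) t h y
      = II k ν t h' y + (Ee ν (k * y) t : ℂ) * h 0 := by
  have ha : 0 < k * y := by positivity
  have i1 := (Eh_int (ν := ν + 1) (by positivity) ha ht hc).const_mul (-ν : ℂ)
  have i2 := (Eh_int (ν := ν + 2) (by positivity) ha ht hc).const_mul (k * y : ℂ)
  have i3 := (Eh_int hν ha ht hc')
  have key := intervalIntegral.integral_eq_sub_of_hasDerivAt_of_le (a := 0) (b := t)
    (f := fun s => (Ee ν (k * y) s : ℂ) * h (t - s))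
    (f' := fun s => ((-ν : ℂ) * ((Ee (ν + 1) (k * y) s : ℂ) * h (t - s))
      + (k * y : ℂ) * ((Ee (ν + 2) (k * y) s : ℂ) * h (t - s)))
      - (Ee ν (k * y) s : ℂ) * h' (t - s)) ht.le (Eh_cont hν ha hc) ?_ ((i1.add i2).sub i3)
  · rw [intervalIntegral.integral_sub (i1.add i2) i3, intervalIntegral.integral_add i1 i2,
      intervalIntegral.integral_const_mul, intervalIntegral.integral_const_mul] at key
    have h0 : Ee ν (k * y) 0 = 0 := by
      unfold Ee; rw [Real.zero_rpow (by linarith)]; simp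
    simp only [h0, sub_self, Complex.ofReal_zero, zero_mul, sub_zero] at key
    unfold II
    linear_combination key
  · intro s hs
    have h1 := (Ee_hasDerivAt (ν := ν) (a := k * y) hs.1).ofReal_comp
    have h2 : HasDerivAt (fun s => h (t - s)) (-h' (t - s)) s :=
      (hd (t - s) ⟨by linarith [hs.2], by linarith [hs.1]⟩).comp_const_sub t s
    refine (h1.mul h2).congr_deriv ?_
    push_cast
    ring

lemma Ee_integral {α k : ℝ} (hα : 0 < α) (hk : 0 < k) :
    ∫ s in Ioi (0:ℝ), Ee (α / 2 + 1) k s = (1 / k) ^ (α / 2) * Real.Gamma (α / 2) := by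
  rw [← Real.integral_rpow_mul_exp_neg_mul_Ioi (half_pos hα) hk,
    ← integral_comp_rpow_Ioi (fun t : ℝ => t ^ (α / 2 - 1) * Real.exp (-(k * t))) (show (-1:ℝ) ≠ 0 by norm_num)]
  refine setIntegral_congr_fun measurableSet_Ioi fun s hs => ?_
  have hs : (0:ℝ) < s := hs
  simp only [Ee, smul_eq_mul, abs_neg, abs_one, one_mul]
  rw [← Real.rpow_mul hs.le, ← mul_assoc, ← Real.rpow_add hs, Real.rpow_neg_one]
  congr 2
  · ring
  · rw [neg_div]; rfl

lemma Ee_scale {ν k y s : ℝ} (hy : 0 < y) (hs : 0 < s) :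
    Ee ν (k * y) (y * s) = y ^ (-ν) * Ee ν k s := by
  unfold Ee
  rw [Real.mul_rpow hy.le hs.le, mul_assoc]
  congr 3
  field_simp

lemma Ee_integrable {α k : ℝ} (hα : 0 < α) (hk : 0 < k) :
    IntegrableOn (Ee (α / 2 + 1) k) (Ioi 0) := by
  apply Integrable.of_integral_ne_zero
  rw [Ee_integral hα hk]
  have := Real.Gamma_pos_of_pos (half_pos hα)
  positivity

lemma II_lim {α k t : ℝ} {h : ℝ → ℂ} (hα : 0 < α) (hk : 0 < k) (ht : 0 < t)
    (hc : ContinuousOn h (Icc 0 t)) :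
    Tendsto (fun y => ((y ^ (α / 2) : ℝ) : ℂ) * II k (α / 2 + 1) t h y) (nhdsWithin 0 (Ioi 0))
      (nhds (((1 / k) ^ (α / 2) * Real.Gamma (α / 2) : ℝ) * h t)) := by
  set H : ℝ → ℂ := (Icc 0 t).indicator (fun s => h (t - s)) with hH
  have hHm : Measurable H := by
    classical
    rw [hH, ← piecewise_eq_indicator]
    exact (sub_cont hc).measurable_piecewise continuousOn_const measurableSet_Icc
  obtain ⟨M, hM⟩ := isCompact_Icc.exists_bound_of_continuousOn (sub_cont hc)
  have hM0 : 0 ≤ M := (norm_nonneg _).trans (hM 0 ⟨le_rfl, ht.le⟩)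
  have hHb : ∀ s, ‖H s‖ ≤ M := by
    intro s
    by_cases hs : s ∈ Icc 0 t
    · rw [hH, indicator_of_mem hs]; exact hM s hs
    · rw [hH, indicator_of_notMem hs]; simpa using hM0
  have hH0 : Tendsto H (nhdsWithin 0 (Ioi 0)) (nhds (h t)) := by
    have h1 := (sub_cont hc 0 ⟨le_rfl, ht.le⟩).mono Ioc_subset_Icc_self
    unfold ContinuousWithinAt at h1
    rw [nhdsWithin_Ioc_eq_nhdsGT ht] at h1
    simp only [sub_zero] at h1
    refine h1.congr' ?_
    filter_upwards [Ioc_mem_nhdsGT ht] with s hs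
    rw [hH, indicator_of_mem (Ioc_subset_Icc_self hs)]
  have e1 : ∀ y, 0 < y → ((y ^ (α / 2) : ℝ) : ℂ) * II k (α / 2 + 1) t h y
      = ∫ s in Ioi (0:ℝ), (Ee (α / 2 + 1) k s : ℂ) * H (y * s) := by
    intro y hy
    have a1 : II k (α / 2 + 1) t h y
        = ∫ s in Ioi (0:ℝ), (Ee (α / 2 + 1) (k * y) s : ℂ) * H s := by
      unfold II
      rw [intervalIntegral.integral_of_le ht.le]
      have : ∀ s ∈ Ioi (0:ℝ), (Ee (α / 2 + 1) (k * y) s : ℂ) * H s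
          = (Ioc 0 t).indicator (fun s => (Ee (α / 2 + 1) (k * y) s : ℂ) * h (t - s)) s := by
        intro s hs
        have hs : (0:ℝ) < s := hs
        by_cases h2 : s ≤ t
        · rw [hH, indicator_of_mem (show s ∈ Icc 0 t from ⟨hs.le, h2⟩),
            indicator_of_mem (show s ∈ Ioc 0 t from ⟨hs, h2⟩)]
        · rw [hH, indicator_of_notMem (fun h => h2 h.2), indicator_of_notMem (fun h => h2 h.2),
            mul_zero]
      rw [setIntegral_congr_fun measurableSet_Ioi this, setIntegral_indicator measurableSet_Ioc,
        inter_eq_self_of_subset_right Ioc_subset_Ioi_self]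
    have a2 := integral_comp_mul_left_Ioi
      (fun s => (Ee (α / 2 + 1) (k * y) s : ℂ) * H s) 0 hy
    rw [mul_zero, ← a1] at a2
    have a3 : II k (α / 2 + 1) t h y = (y : ℂ) *
        ∫ s in Ioi (0:ℝ), (Ee (α / 2 + 1) (k * y) (y * s) : ℂ) * H (y * s) := by
      rw [a2, Complex.real_smul, ← mul_assoc]
      push_cast
      rw [mul_inv_cancel₀ (by exact_mod_cast hy.ne'), one_mul]
    rw [a3, ← mul_assoc, ← integral_const_mul]
    refine setIntegral_congr_fun measurableSet_Ioi fun s hs => ?_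
    rw [Ee_scale hy hs, ← mul_assoc]
    congr 1
    rw [← Complex.ofReal_mul, ← Complex.ofReal_mul]
    congr 1
    rw [← mul_assoc, ← Real.rpow_add_one hy.ne', ← Real.rpow_add hy, add_neg_cancel, Real.rpow_zero,
      one_mul]
  have e2 : (((1 / k) ^ (α / 2) * Real.Gamma (α / 2) : ℝ) * h t : ℂ)
      = ∫ s in Ioi (0:ℝ), (Ee (α / 2 + 1) k s : ℂ) * h t := by
    rw [integral_mul_const, integral_complex_ofReal, Ee_integral hα hk]
  rw [e2]
  have hEi := Ee_integrable hα hk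
  have key := tendsto_integral_filter_of_dominated_convergence
    (μ := volume.restrict (Ioi (0:ℝ))) (l := nhdsWithin (0:ℝ) (Ioi 0))
    (F := fun y s => (Ee (α / 2 + 1) k s : ℂ) * H (y * s))
    (f := fun s => (Ee (α / 2 + 1) k s : ℂ) * h t)
    (fun s => Ee (α / 2 + 1) k s * M) ?_ ?_ (hEi.mul_const M) ?_
  · refine key.congr' ?_
    filter_upwards [self_mem_nhdsWithin] with y hy
    exact (e1 y hy).symm
  · refine Eventually.of_forall fun y => ?_
    exact (Complex.continuous_ofReal.comp_aestronglyMeasurable hEi.aestronglyMeasurable).mul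
      (hHm.comp (measurable_const_mul y)).aestronglyMeasurable
  · refine Eventually.of_forall fun y => ?_
    filter_upwards [ae_restrict_mem measurableSet_Ioi] with s hs
    have hs : (0:ℝ) < s := hs
    rw [norm_mul, Complex.norm_real, Real.norm_of_nonneg (Ee_nonneg hs.le)]
    exact mul_le_mul_of_nonneg_left (hHb _) (Ee_nonneg hs.le)
  · filter_upwards [ae_restrict_mem measurableSet_Ioi] with s hs
    have hs : (0:ℝ) < s := hs
    refine (hH0.comp ?_).const_mul _
    refine tendsto_nhdsWithin_iff.2 ⟨?_, ?_⟩
    · have : Tendsto (fun y : ℝ => y * s) (nhds 0) (nhds (0 * s)) := by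
        exact (continuous_mul_const s).tendsto 0
      rw [zero_mul] at this
      exact this.mono_left nhdsWithin_le_nhds
    · filter_upwards [self_mem_nhdsWithin] with y hy
      exact mul_pos hy hs

lemma DxC_form {α : ℝ} (hα : 0 < α) {w f f1 f2 : ℝ → ℂ}
    (hw : ∀ x > 0, w x = x * f (x ^ (2 / α)))
    (h1 : ∀ y > 0, HasDerivAt f (f1 y) y) (h2 : ∀ y > 0, HasDerivAt f1 (f2 y) y)
    {x : ℝ} (hx : 0 < x) :
    DxC α w x = x * (((2 / α : ℝ) : ℂ) * ((1 + ((2 / α : ℝ) : ℂ)) * f1 (x ^ (2 / α))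
      + ((2 / α : ℝ) : ℂ) * ((x ^ (2 / α) : ℝ) : ℂ) * f2 (x ^ (2 / α)))) := by
  have hex : 2 * (α - 1) / α = 2 - 2 / α := by field_simp
  have hb : ∀ x : ℝ, 0 < x → HasDerivAt (fun x : ℝ => x ^ (2 / α)) ((2 / α) * x ^ (2 / α - 1)) x :=
    fun x hx => Real.hasDerivAt_rpow_const (Or.inl hx.ne')
  unfold DxC
  rw [hex]
  generalize 2 / α = b at *
  have hq : ∀ x : ℝ, 0 < x → HasDerivAt w (f (x ^ b) + b * ((x ^ b : ℝ) : ℂ) * f1 (x ^ b)) x := by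
    intro x hx
    have a1 : HasDerivAt (fun x : ℝ => f (x ^ b)) ((b * x ^ (b - 1)) • f1 (x ^ b)) x :=
      (h1 _ (Real.rpow_pos_of_pos hx b)).scomp x (hb x hx)
    have a2 := ((hasDerivAt_id x).ofReal_comp).mul a1
    have a3 : HasDerivAt w _ x := a2.congr_of_eventuallyEq (by
      filter_upwards [Ioi_mem_nhds hx] with z hz
      exact hw z hz)
    refine a3.congr_deriv ?_
    have : x ^ b = x * x ^ (b - 1) := by
      rw [Real.rpow_sub_one hx.ne']; field_simp
    rw [Complex.real_smul]
    have h' : ((x ^ b : ℝ) : ℂ) = x * ((x ^ (b - 1) : ℝ) : ℂ) := by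
      rw [← Complex.ofReal_mul, ← this]
    rw [h']
    push_cast
    simp only [id]
    ring
  have hq2 : HasDerivAt (deriv w)
      ((b * x ^ (b - 1)) • ((1 + b) * f1 (x ^ b) + b * ((x ^ b : ℝ) : ℂ) * f2 (x ^ b))) x := by
    have hy := Real.rpow_pos_of_pos hx b
    have a1 : HasDerivAt (fun y : ℝ => f y + b * (y : ℂ) * f1 y)
        ((1 + b) * f1 (x ^ b) + b * ((x ^ b : ℝ) : ℂ) * f2 (x ^ b)) (x ^ b) := by
      have c1 := (((hasDerivAt_id (x ^ b)).ofReal_comp).const_mul (b : ℂ)).mul (h2 _ hy)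
      refine ((h1 _ hy).add c1).congr_deriv ?_
      simp only [id]
      push_cast
      ring
    have a2 := a1.scomp x (hb x hx)
    refine a2.congr_of_eventuallyEq ?_
    filter_upwards [Ioi_mem_nhds hx] with z hz
    exact (hq z hz).deriv
  rw [iteratedDeriv_succ, iteratedDeriv_one, hq2.deriv, Complex.real_smul, ← mul_assoc,
    ← Complex.ofReal_mul]
  have : x ^ (2 - b) * (b * x ^ (b - 1)) = x * b := by
    rw [mul_left_comm, ← Real.rpow_add hx, show 2 - b + (b - 1) = 1 by ring, Real.rpow_one, mul_comm]
  rw [this]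
  push_cast
  ring

lemma Tt_eq {α t : ℝ} (ht : 0 < t) (g : ℝ → ℂ) (x : ℝ) :
    Tt α t g x = x * (((α ^ α / (2 ^ α * Real.Gamma (α / 2)) : ℝ) : ℂ) *
      II (α ^ 2 / 4) (α / 2 + 1) t g (x ^ (2 / α))) := by
  unfold Tt II
  rw [← integral_Ioc_eq_integral_Ioo, ← intervalIntegral.integral_of_le ht.le]
  have := intervalIntegral.integral_comp_sub_left (a := 0) (b := t)
    (fun τ => (Kker α x (t - τ) : ℂ) * g τ) t
  rw [sub_self, sub_zero] at this
  rw [← this, ← mul_assoc, ← intervalIntegral.integral_const_mul]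
  congr 1
  ext s
  rw [sub_sub_cancel, ← mul_assoc]
  congr 1
  rw [← Complex.ofReal_mul, ← Complex.ofReal_mul]
  congr 1
  unfold Kker Ee
  rw [show -(α ^ 2) * x ^ (2 / α) / (4 * s) = -(α ^ 2 / 4 * x ^ (2 / α)) / s by
    rw [← div_div]; ring]
  ring

lemma main_form {α t : ℝ} (hα : 0 < α) (ht : 0 < t) (m : ℕ) (G : ℕ → ℝ → ℂ)
    (hc : ∀ j ≤ m, ContinuousOn (G j) (Icc 0 t))
    (hd : ∀ j < m, ∀ s ∈ Ioo 0 t, HasDerivAt (G j) (G (j + 1) s) s) :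
    ∀ j ≤ m, ∃ n : ℝ → ℂ, ContDiff ℝ (⊤ : ℕ∞) n ∧ ∀ x > 0, (DxC α)^[j] (Tt α t (G 0)) x
      = x * (((α ^ α / (2 ^ α * Real.Gamma (α / 2)) : ℝ) : ℂ) *
        II (α ^ 2 / 4) (α / 2 + 1) t (G j) (x ^ (2 / α)) + n (x ^ (2 / α))) := by
  intro j
  induction j with
  | zero =>
    intro _
    refine ⟨fun _ => 0, contDiff_const, fun x hx => ?_⟩
    rw [Function.iterate_zero, id, Tt_eq ht, add_zero]
  | succ j ih =>
    intro hj
    obtain ⟨n, hn, hw⟩ := ih (by omega)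
    set C : ℂ := ((α ^ α / (2 ^ α * Real.Gamma (α / 2)) : ℝ) : ℂ)
    have hk : 0 < α ^ 2 / 4 := by positivity
    have hν : 0 < α / 2 + 1 := by positivity
    have hcj := hc j (by omega)
    have hn1 := (contDiff_infty_iff_deriv.1 hn)
    have hn2 := (contDiff_infty_iff_deriv.1 hn1.2)
    refine ⟨fun y => ((2 / α : ℝ) : ℂ) * ((1 + ((2 / α : ℝ) : ℂ)) * deriv n y
      + ((2 / α : ℝ) : ℂ) * (y : ℂ) * deriv (deriv n) y)
      + C * ((Ee (α / 2 + 1) (α ^ 2 / 4 * y) t : ℝ) : ℂ) * G j 0, ?_, fun x hx => ?_⟩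
    · have e1 : ContDiff ℝ (⊤ : ℕ∞) (fun y : ℝ => (y : ℂ)) := Complex.ofRealCLM.contDiff
      have e2 : ContDiff ℝ (⊤ : ℕ∞)
          (fun y : ℝ => ((Ee (α / 2 + 1) (α ^ 2 / 4 * y) t : ℝ) : ℂ)) := by
        have e3 : ContDiff ℝ (⊤ : ℕ∞) (fun y : ℝ => Ee (α / 2 + 1) (α ^ 2 / 4 * y) t) := by
          unfold Ee
          fun_prop
        exact e1.comp e3
      exact (contDiff_const.mul ((contDiff_const.mul hn1.2).add
        ((contDiff_const.mul e1).mul hn2.2))).add ((contDiff_const.mul e2).mul contDiff_const)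
    · rw [Function.iterate_succ_apply']
      have hy := Real.rpow_pos_of_pos hx (2 / α)
      rw [DxC_form hα
        (f := fun y => C * II (α ^ 2 / 4) (α / 2 + 1) t (G j) y + n y)
        (f1 := fun y => C * (-((α ^ 2 / 4 : ℝ) : ℂ) * II (α ^ 2 / 4) (α / 2 + 1 + 1) t (G j) y)
          + deriv n y)
        (f2 := fun y => C * (-((α ^ 2 / 4 : ℝ) : ℂ) * (-((α ^ 2 / 4 : ℝ) : ℂ)
          * II (α ^ 2 / 4) (α / 2 + 1 + 1 + 1) t (G j) y))
          + deriv (deriv n) y) hw ?_ ?_ hx]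
      · have hp := II_parts hk hν ht hy hcj (hc (j + 1) hj) (hd j (by omega))
        rw [show α / 2 + 1 + 1 + 1 = α / 2 + 1 + 2 by ring]
        have hα' : (α : ℂ) ≠ 0 := by exact_mod_cast hα.ne'
        simp only
        generalize x ^ (2 / α) = y at *
        generalize II (α ^ 2 / 4) (α / 2 + 1 + 1) t (G j) y = I1 at *
        generalize II (α ^ 2 / 4) (α / 2 + 1 + 2) t (G j) y = I2 at *
        generalize II (α ^ 2 / 4) (α / 2 + 1) t (G (j + 1)) y = I3 at *
        generalize ((Ee (α / 2 + 1) (α ^ 2 / 4 * y) t : ℝ) : ℂ) = e at *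
        have r1 : I3 = -((α / 2 + 1 : ℝ) : ℂ) * I1 + ((α ^ 2 / 4 : ℝ) : ℂ) * y * I2 - e * G j 0 := by
          linear_combination -hp
        rw [r1]
        push_cast
        field_simp
        ring
      · intro y hy
        exact ((II_hasDerivAt hk hν ht hy hcj).const_mul C).add (hn1.1 y).hasDerivAt
      · intro y hy
        exact (((II_hasDerivAt hk (by positivity) ht hy hcj).const_mul _).const_mul C).add
          (hn2.1 y).hasDerivAt

lemma main_lim {α t : ℝ} (hα : 0 < α) (ht : 0 < t) (m : ℕ) (G : ℕ → ℝ → ℂ)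
    (hc : ∀ j ≤ m, ContinuousOn (G j) (Icc 0 t))
    (hd : ∀ j < m, ∀ s ∈ Ioo 0 t, HasDerivAt (G j) (G (j + 1) s) s) :
    Tendsto (fun x => (DxC α)^[m] (Tt α t (G 0)) x) (nhdsWithin 0 (Ioi 0)) (nhds (G m t)) := by
  obtain ⟨n, hn, hw⟩ := main_form hα ht m G hc hd m le_rfl
  have hk : 0 < α ^ 2 / 4 := by positivity
  have hb : 0 < 2 / α := by positivity
  have hpow0 : Tendsto (fun x : ℝ => x ^ (2 / α)) (nhdsWithin 0 (Ioi 0)) (nhds 0) := by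
    have := (Real.continuous_rpow_const hb.le).tendsto 0
    rw [Real.zero_rpow hb.ne'] at this
    exact this.mono_left nhdsWithin_le_nhds
  have hpow : Tendsto (fun x : ℝ => x ^ (2 / α)) (nhdsWithin 0 (Ioi 0)) (nhdsWithin 0 (Ioi 0)) := by
    refine tendsto_nhdsWithin_iff.2 ⟨hpow0, ?_⟩
    filter_upwards [self_mem_nhdsWithin] with x hx
    exact Real.rpow_pos_of_pos hx _
  have hG := Real.Gamma_pos_of_pos (half_pos hα)
  have l1 := ((II_lim hα hk ht (hc m le_rfl)).comp hpow).const_mul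
    ((α ^ α / (2 ^ α * Real.Gamma (α / 2)) : ℝ) : ℂ)
  have l2 : Tendsto (fun x : ℝ => (x : ℂ) * n (x ^ (2 / α))) (nhdsWithin 0 (Ioi 0))
      (nhds ((0 : ℝ) * n 0)) :=
    ((Complex.continuous_ofReal.tendsto 0).mono_left nhdsWithin_le_nhds).mul
      ((hn.continuous.tendsto 0).comp hpow0)
  have l3 := l1.add l2
  have hconst : (α ^ α / (2 ^ α * Real.Gamma (α / 2))) *
      ((1 / (α ^ 2 / 4)) ^ (α / 2) * Real.Gamma (α / 2)) = 1 := by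
    rw [show 1 / (α ^ 2 / 4) = (2 / α) ^ (2:ℝ) by rw [Real.rpow_two]; field_simp; norm_num,
      ← Real.rpow_mul hb.le, show 2 * (α / 2) = α by ring, Real.div_rpow (by norm_num) hα.le]
    have h1 := Real.rpow_pos_of_pos hα α
    have h2 := Real.rpow_pos_of_pos (two_pos (α := ℝ)) α
    field_simp
  rw [← mul_assoc, ← Complex.ofReal_mul, hconst, Complex.ofReal_one, one_mul, Complex.ofReal_zero,
    zero_mul, add_zero] at l3
  refine l3.congr' ?_
  filter_upwards [self_mem_nhdsWithin] with x hx
  have hx : 0 < x := hx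
  rw [hw x hx]
  simp only [Function.comp]
  rw [← Real.rpow_mul hx.le, show 2 / α * (α / 2) = 1 by field_simp, Real.rpow_one]
  ring

theorem stmt7 (α T : ℝ) (hα : 0 < α) (hT : 0 < T) (m : ℕ)
    (g : ℝ → ℂ) (hg : ContDiffOn ℝ (m : ℕ∞) g (Set.Icc 0 T))
    (t : ℝ) (ht : t ∈ Set.Ioo 0 T) :
    Tendsto (fun x => (DxC α)^[m] (Tt α t g) x) (nhdsWithin 0 (Set.Ioi 0))
      (nhds (iteratedDeriv m g t)) := by

  have hu : UniqueDiffOn ℝ (Icc 0 T) := uniqueDiffOn_Icc hT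
  have hsub : Icc 0 t ⊆ Icc 0 T := Icc_subset_Icc_right ht.2.le
  have key := main_lim hα ht.1 m (fun j => iteratedDerivWithin j g (Icc 0 T)) ?_ ?_
  · simp only [iteratedDerivWithin_zero] at key
    rwa [iteratedDerivWithin_eq_iteratedDeriv hu ?_ (Ioo_subset_Icc_self ht)] at key
    exact hg.contDiffAt (Icc_mem_nhds ht.1 ht.2)
  · intro j hj
    exact (hg.continuousOn_iteratedDerivWithin (by exact_mod_cast hj) hu).mono hsub
  · intro j hj s hs
    have hs' : s ∈ Ioo 0 T := ⟨hs.1, hs.2.trans ht.2⟩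
    have hd := hg.differentiableOn_iteratedDerivWithin (m := j) (by exact_mod_cast hj) hu
    have := (hd s (Ioo_subset_Icc_self hs')).hasDerivWithinAt.hasDerivAt (Icc_mem_nhds hs'.1 hs'.2)
    simp only [iteratedDerivWithin_succ]
    exact this
end

section
/- Fix α > 0 and let g : [0,∞) → ℂ be continuous and bounded. Suppose u : [0,∞)×(0,∞) → ℂ is bounded, continuous on [0,∞)×(0,∞), twice continuously differentiable on (0,∞)×(0,∞), and satisfies: ∂_t u(x,t) = x^{2(α-1)/α} ∂_{xx} u(x,t) for all x, t > 0; u(0,t) = g(t) for all t > 0; u(x,t) → 0 as t → 0⁺ for every x > 0; and u(x,t) → 0 as x → ∞ for every t > 0. Then u(x,t) = (T_t^α g)(x) = ∫_0^t K_α(x,t-τ) g(τ) dτ for all x, t > 0. -/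
open MeasureTheory Filter Set

/-- real maximum principle -/
lemma maxp_real (D q : ℝ → ℝ) (lam : ℝ) (hlam : 0 < lam) (hq : ∀ x, 0 < x → 0 < q x)
    (hqc : ContinuousOn q (Ioi 0)) (hD : ContinuousOn D (Ioi 0))
    (h0 : Tendsto D (nhdsWithin 0 (Ioi 0)) (nhds 0)) (hi : Tendsto D atTop (nhds 0))
    (hid : ∀ x h, 0 < h → h < x → D (x + h) + D (x - h) - 2 * D x =
      lam * ∫ s in (0:ℝ)..h, (h - s) * (q (x + s) * D (x + s) + q (x - s) * D (x - s))) :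
    ∀ x, 0 < x → D x ≤ 0 := by
  intro x1 hx1
  by_contra! hpos
  have e0 : ∀ᶠ x in nhdsWithin 0 (Ioi 0), D x < D x1 := h0.eventually (gt_mem_nhds hpos)
  have ei : ∀ᶠ x in atTop, D x < D x1 := hi.eventually (gt_mem_nhds hpos)
  obtain ⟨a, ha0, ha⟩ := mem_nhdsGT_iff_exists_Ioo_subset.1 e0
  obtain ⟨b, hb⟩ := eventually_atTop.1 ei
  have ha0 : 0 < a := ha0
  have hxa : a ≤ x1 := by
    by_contra! hc
    exact lt_irrefl (D x1) (ha ⟨hx1, hc⟩)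
  have hxb : x1 ≤ b := by
    by_contra! hc
    exact lt_irrefl _ (hb x1 hc.le)
  obtain ⟨x0, hx0, hmax⟩ := isCompact_Icc.exists_isMaxOn (s := Icc a b) ⟨x1, hxa, hxb⟩
    (hD.mono fun y hy => lt_of_lt_of_le ha0 hy.1)
  have hx0p : 0 < x0 := lt_of_lt_of_le ha0 hx0.1
  have hm1 : D x1 ≤ D x0 := hmax ⟨hxa, hxb⟩
  have hm : ∀ y, 0 < y → D y ≤ D x0 := by
    intro y hy
    by_cases h1 : y < a
    · exact le_trans (le_of_lt (ha ⟨hy, h1⟩)) hm1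
    by_cases h2 : b < y
    · exact le_trans (le_of_lt (hb y h2.le)) hm1
    exact hmax ⟨not_lt.1 h1, not_lt.1 h2⟩
  have hDat : ContinuousAt D x0 := hD.continuousAt (Ioi_mem_nhds hx0p)
  have hev : ∀ᶠ y in nhds x0, 0 < D y := hDat.eventually (lt_mem_nhds (lt_of_lt_of_le hpos hm1))
  obtain ⟨r, hr, hball⟩ := Metric.eventually_nhds_iff.1 hev
  set h := min r (x0) / 2 with hh
  have hh0 : 0 < h := by positivity
  have hhr : h < r := by have := min_le_left r x0; linarith
  have hhx : h < x0 := by have := min_le_right r x0; linarith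
  have key := hid x0 h hh0 hhx
  have h_intg : 0 < ∫ s in (0:ℝ)..h, (h - s) * (q (x0 + s) * D (x0 + s) + q (x0 - s) * D (x0 - s)) := by
    apply intervalIntegral.intervalIntegral_pos_of_pos_on _ _ hh0
    · apply ContinuousOn.intervalIntegrable
      rw [uIcc_of_le hh0.le]
      have c1 : ContinuousOn (fun s => x0 + s) (Icc 0 h) := by fun_prop
      have c2 : ContinuousOn (fun s => x0 - s) (Icc 0 h) := by fun_prop
      have m1 : MapsTo (fun s => x0 + s) (Icc 0 h) (Ioi 0) := fun s hs => by
        have := hs.1; simp only [mem_Ioi]; linarith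
      have m2 : MapsTo (fun s => x0 - s) (Icc 0 h) (Ioi 0) := fun s hs => by
        have := hs.2; simp only [mem_Ioi]; linarith
      exact (by fun_prop : ContinuousOn (fun s => h - s) (Icc 0 h)).mul
        (((hqc.comp c1 m1).mul (hD.comp c1 m1)).add ((hqc.comp c2 m2).mul (hD.comp c2 m2)))
    · intro s hs
      have h1 := hs.1
      have h2 := hs.2
      have p1 : 0 < D (x0 + s) := hball (by rw [Real.dist_eq, abs_lt]; constructor <;> linarith)
      have p2 : 0 < D (x0 - s) := hball (by rw [Real.dist_eq, abs_lt]; constructor <;> linarith)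
      have q1 := hq (x0 + s) (by linarith)
      have q2 := hq (x0 - s) (by linarith)
      have : 0 < h - s := by linarith
      positivity
  have l1 := hm (x0 + h) (by linarith)
  have l2 := hm (x0 - h) (by linarith)
  have : 0 < lam * ∫ s in (0:ℝ)..h, (h - s) * (q (x0 + s) * D (x0 + s) + q (x0 - s) * D (x0 - s)) := by
    positivity
  linarith

lemma second_diff_clm (L : ℂ →L[ℝ] ℝ) (D : ℝ → ℂ) (q : ℝ → ℝ) (lam x h : ℝ) (hh : 0 < h) (hx : h < x)
    (hqc : ContinuousOn q (Ioi 0)) (hD : ContinuousOn D (Ioi 0))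
    (hid : D (x + h) + D (x - h) - 2 * D x =
      lam * ∫ s in (0:ℝ)..h, ((h - s : ℝ) : ℂ) * ((q (x + s) : ℂ) * D (x + s) + (q (x - s) : ℂ) * D (x - s))) :
    L (D (x + h)) + L (D (x - h)) - 2 * L (D x) =
      lam * ∫ s in (0:ℝ)..h, (h - s) * (q (x + s) * L (D (x + s)) + q (x - s) * L (D (x - s))) := by
  have hr : ∀ (r : ℝ) (z : ℂ), L ((r : ℂ) * z) = r * L z := by
    intro r z
    rw [← Complex.real_smul, map_smul, smul_eq_mul]
  have hii : IntervalIntegrable (fun s => ((h - s : ℝ) : ℂ) * ((q (x + s) : ℂ) * D (x + s) + (q (x - s) : ℂ) * D (x - s))) volume 0 h := by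
    apply ContinuousOn.intervalIntegrable
    rw [uIcc_of_le hh.le]
    have c1 : ContinuousOn (fun s => x + s) (Icc 0 h) := by fun_prop
    have c2 : ContinuousOn (fun s => x - s) (Icc 0 h) := by fun_prop
    have m1 : MapsTo (fun s => x + s) (Icc 0 h) (Ioi 0) := fun s hs => by
      have := hs.1; simp only [mem_Ioi]; linarith
    have m2 : MapsTo (fun s => x - s) (Icc 0 h) (Ioi 0) := fun s hs => by
      have := hs.2; simp only [mem_Ioi]; linarith
    exact (by fun_prop : ContinuousOn (fun s => ((h - s : ℝ) : ℂ)) (Icc 0 h)).mul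
        (((Complex.continuous_ofReal.comp_continuousOn (hqc.comp c1 m1)).mul (hD.comp c1 m1)).add
         ((Complex.continuous_ofReal.comp_continuousOn (hqc.comp c2 m2)).mul (hD.comp c2 m2)))
  have h2 := congrArg L hid
  rw [hr, ← L.intervalIntegral_comp_comm hii, map_sub, map_add,
    show (2 : ℂ) * D x = ((2 : ℝ) : ℂ) * D x by norm_num, hr] at h2
  rw [h2]
  simp only [hr, map_add]

lemma maxp (D : ℝ → ℂ) (q : ℝ → ℝ) (lam : ℝ) (hlam : 0 < lam) (hq : ∀ x, 0 < x → 0 < q x)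
    (hqc : ContinuousOn q (Ioi 0)) (hD : ContinuousOn D (Ioi 0))
    (h0 : Tendsto D (nhdsWithin 0 (Ioi 0)) (nhds 0)) (hi : Tendsto D atTop (nhds 0))
    (hid : ∀ x h, 0 < h → h < x → D (x + h) + D (x - h) - 2 * D x =
      lam * ∫ s in (0:ℝ)..h, ((h - s : ℝ) : ℂ) * ((q (x + s) : ℂ) * D (x + s) + (q (x - s) : ℂ) * D (x - s))) :
    ∀ x, 0 < x → D x = 0 := by
  have key : ∀ L : ℂ →L[ℝ] ℝ, ∀ x, 0 < x → L (D x) ≤ 0 := by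
    intro L
    refine maxp_real (fun x => L (D x)) q lam hlam hq hqc (L.continuous.comp_continuousOn hD) ?_ ?_ ?_
    · simpa [Function.comp_def] using (L.continuous.tendsto 0).comp h0
    · simpa [Function.comp_def] using (L.continuous.tendsto 0).comp hi
    · intro x h hh hx
      exact second_diff_clm L D q lam x h hh hx hqc hD (hid x h hh hx)
  intro x hx
  have a1 := key Complex.reCLM x hx
  have a2 := key (-Complex.reCLM) x hx
  have a3 := key Complex.imCLM x hx
  have a4 := key (-Complex.imCLM) x hx
  simp at a1 a2 a3 a4
  apply Complex.ext <;> simp <;> linarith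

lemma integrableOn_exp_mul (lam : ℝ) (hlam : 0 < lam) (f : ℝ → ℂ) (M : ℝ)
    (hf : ContinuousOn f (Ioi 0)) (hM : ∀ t, 0 < t → ‖f t‖ ≤ M) :
    IntegrableOn (fun t => (Real.exp (-lam * t) : ℂ) * f t) (Ioi 0) := by
  have h1 : IntegrableOn (fun t => M * Real.exp (-lam * t)) (Ioi 0) :=
    (integrableOn_exp_mul_Ioi (by linarith : -lam < 0) 0).const_mul M
  refine Integrable.mono' h1 ?_ ?_
  · refine ContinuousOn.aestronglyMeasurable ?_ measurableSet_Ioi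
    refine ContinuousOn.mul ?_ hf
    fun_prop
  · refine (ae_restrict_mem measurableSet_Ioi).mono fun t ht => ?_
    rw [norm_mul, Complex.norm_real, Real.norm_of_nonneg (Real.exp_pos _).le, mul_comm]
    exact mul_le_mul_of_nonneg_right (hM t ht) (Real.exp_pos _).le

lemma laplace_inj_real (H : ℝ → ℝ) (hH : ContinuousOn H (Ioi 0)) (M : ℝ) (hM : ∀ t, 0 < t → |H t| ≤ M)
    (hz : ∀ n : ℕ, ∫ t in Ioi (0:ℝ), Real.exp (-(n + 1 : ℝ) * t) * H t = 0) :
    ∀ t, 0 < t → H t = 0 := by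
  have hM0 : 0 ≤ M := (abs_nonneg _).trans (hM 1 one_pos)
  have h_intg : ∀ F : ℝ → ℝ, ContinuousOn F (Ioi 0) → ∀ C, (∀ t, 0 < t → |F t| ≤ C) →
      IntegrableOn (fun t => Real.exp (-1 * t) * F t) (Ioi 0) := by
    intro F hF C hC
    have h1 : IntegrableOn (fun t => C * Real.exp (-1 * t)) (Ioi 0) :=
      (integrableOn_exp_mul_Ioi (by norm_num : (-1:ℝ) < 0) 0).const_mul C
    refine Integrable.mono' h1 ?_ ?_
    · refine ContinuousOn.aestronglyMeasurable ?_ measurableSet_Ioi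
      refine ContinuousOn.mul ?_ hF
      fun_prop
    · refine (ae_restrict_mem measurableSet_Ioi).mono fun t ht => ?_
      rw [norm_mul, Real.norm_of_nonneg (Real.exp_pos _).le, mul_comm]
      exact mul_le_mul_of_nonneg_right (hC t ht) (Real.exp_pos _).le
  have hexp1 : ∀ t : ℝ, 0 < t → 0 < Real.exp (-t) ∧ Real.exp (-t) < 1 := fun t ht =>
    ⟨Real.exp_pos _, by rw [Real.exp_lt_one_iff]; linarith⟩
  have hpoly : ∀ p : Polynomial ℝ,
      IntegrableOn (fun t => Real.exp (-1 * t) * (p.eval (Real.exp (-t)) * H t)) (Ioi 0) ∧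
      ∫ t in Ioi (0:ℝ), Real.exp (-1 * t) * (p.eval (Real.exp (-t)) * H t) = 0 := by
    intro p
    induction p using Polynomial.induction_on' with
    | add p q hp hq =>
      have : (fun t => Real.exp (-1 * t) * ((p + q).eval (Real.exp (-t)) * H t)) =
        fun t => Real.exp (-1 * t) * (p.eval (Real.exp (-t)) * H t) + Real.exp (-1 * t) * (q.eval (Real.exp (-t)) * H t) := by
        ext t; rw [Polynomial.eval_add]; ring
      rw [this]
      exact ⟨hp.1.add hq.1, by rw [integral_add hp.1 hq.1, hp.2, hq.2, add_zero]⟩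
    | monomial n a =>
      have : (fun t => Real.exp (-1 * t) * ((Polynomial.monomial n a).eval (Real.exp (-t)) * H t)) =
        fun t => a * (Real.exp (-(n + 1 : ℝ) * t) * H t) := by
        ext t
        rw [Polynomial.eval_monomial, ← Real.exp_nat_mul,
          show -(n + 1 : ℝ) * t = -1 * t + n * -t by ring, Real.exp_add]
        ring
      constructor
      · apply h_intg _ _ (|a| * M)
        · intro t ht
          rw [Polynomial.eval_monomial, abs_mul, abs_mul]
          have h1 := hexp1 t ht
          have h2 : |Real.exp (-t) ^ n| ≤ 1 := by
            rw [abs_of_nonneg (by positivity)]; exact pow_le_one₀ h1.1.le h1.2.le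
          have h3 := hM t ht
          calc |a| * |Real.exp (-t) ^ n| * |H t| ≤ |a| * 1 * M := by gcongr
            _ = _ := by ring
        · refine ContinuousOn.mul ?_ hH
          simp only [Polynomial.eval_monomial]; fun_prop
      · rw [this, integral_const_mul, hz n, mul_zero]
  set φ : ℝ → ℝ := fun y => y * (1 - y) * H (-Real.log y) with hφ
  have hφc : ContinuousOn φ (Icc 0 1) := by
    intro y hy
    by_cases hy0 : 0 < y ∧ y < 1
    · have hl : 0 < -Real.log y := by have := Real.log_neg hy0.1 hy0.2; linarith
      refine ContinuousAt.continuousWithinAt ?_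
      have c1 : ContinuousAt (fun y => -Real.log y) y := (Real.continuousAt_log hy0.1.ne').neg
      have c2 : ContinuousAt H (-Real.log y) := hH.continuousAt (Ioi_mem_nhds hl)
      have c3 : ContinuousAt (fun y => H (-Real.log y)) y := ContinuousAt.comp (f := fun y => -Real.log y) c2 c1
      exact (by fun_prop : ContinuousAt (fun y : ℝ => y * (1 - y)) y).mul c3
    · have hz' : y * (1 - y) = 0 := by
        rcases hy with ⟨h1, h2⟩
        rcases h1.eq_or_lt with h | h
        · rw [← h]; ring
        · have : y = 1 := le_antisymm h2 (not_lt.1 fun hc => hy0 ⟨h, hc⟩)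
          rw [this]; ring
      have hφy : φ y = 0 := by simp only [hφ, hz', zero_mul]
      unfold ContinuousWithinAt
      rw [hφy]
      have hb : Tendsto (fun y : ℝ => y * (1 - y) * M) (nhdsWithin y (Icc 0 1)) (nhds 0) := by
        have : ContinuousWithinAt (fun y : ℝ => y * (1 - y) * M) (Icc 0 1) y := by fun_prop
        unfold ContinuousWithinAt at this
        beta_reduce at this
        rwa [hz', zero_mul] at this
      refine squeeze_zero_norm' ?_ hb
      filter_upwards [self_mem_nhdsWithin] with w hw
      by_cases hw0 : 0 < w ∧ w < 1
      · have hl : 0 < -Real.log w := by have := Real.log_neg hw0.1 hw0.2; linarith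
        have h3 := hM _ hl
        have h4 : 0 ≤ w * (1 - w) := mul_nonneg hw.1 (by linarith [hw.2])
        rw [hφ, norm_mul, Real.norm_of_nonneg h4, Real.norm_eq_abs]
        gcongr
      · have hz' : w * (1 - w) = 0 := by
          rcases hw with ⟨h1, h2⟩
          rcases h1.eq_or_lt with h | h
          · rw [← h]; ring
          · have : w = 1 := le_antisymm h2 (not_lt.1 fun hc => hw0 ⟨h, hc⟩)
            rw [this]; ring
        simp only [hφ, hz', zero_mul, norm_zero, le_refl]
  have hφe : ∀ t, φ (Real.exp (-t)) = Real.exp (-t) * (1 - Real.exp (-t)) * H t := by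
    intro t; simp only [hφ, Real.log_exp, neg_neg]
  have hJi : IntegrableOn (fun t => Real.exp (-1 * t) * (φ (Real.exp (-t)) * H t)) (Ioi 0) := by
    apply h_intg _ _ (M * M)
    · intro t ht
      rw [hφe]
      have h1 := hexp1 t ht
      have h3 := hM t ht
      rw [abs_mul, abs_mul]
      have h4 : |Real.exp (-t) * (1 - Real.exp (-t))| ≤ 1 := by
        rw [abs_of_nonneg (mul_nonneg h1.1.le (by linarith))]
        nlinarith
      calc _ ≤ 1 * M * M := by gcongr
        _ = _ := by ring
    · simp only [hφe]
      exact ((by fun_prop : ContinuousOn (fun t => Real.exp (-t) * (1 - Real.exp (-t))) (Ioi 0)).mul hH).mul hH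
  have hJ0 : ∫ t in Ioi (0:ℝ), Real.exp (-1 * t) * (φ (Real.exp (-t)) * H t) = 0 := by
    have hle : ∀ ε > 0, |∫ t in Ioi (0:ℝ), Real.exp (-1 * t) * (φ (Real.exp (-t)) * H t)| ≤ ε * M := by
      intro ε hε
      obtain ⟨p, hp⟩ := exists_polynomial_near_of_continuousOn 0 1 φ hφc ε hε
      obtain ⟨p1, p2⟩ := hpoly p
      have e1 : ∫ t in Ioi (0:ℝ), Real.exp (-1 * t) * (φ (Real.exp (-t)) * H t) =
         ∫ t in Ioi (0:ℝ), (Real.exp (-1 * t) * (φ (Real.exp (-t)) * H t) - Real.exp (-1 * t) * (p.eval (Real.exp (-t)) * H t)) := by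
        rw [integral_sub hJi p1, p2, sub_zero]
      have e2 : ∫ t in Ioi (0:ℝ), ε * M * Real.exp (-1 * t) = ε * M := by
        rw [integral_const_mul, integral_exp_mul_Ioi (by norm_num)]; simp
      rw [e1, ← e2, ← Real.norm_eq_abs]
      refine norm_integral_le_of_norm_le ((integrableOn_exp_mul_Ioi (by norm_num : (-1:ℝ) < 0) 0).const_mul _) ?_
      refine (ae_restrict_mem measurableSet_Ioi).mono fun t ht => ?_
      have h1 := hexp1 t ht
      have h2 := (hp _ ⟨h1.1.le, h1.2.le⟩).le
      rw [show Real.exp (-1 * t) * (φ (Real.exp (-t)) * H t) - Real.exp (-1 * t) * (p.eval (Real.exp (-t)) * H t) =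
        -((p.eval (Real.exp (-t)) - φ (Real.exp (-t))) * H t * Real.exp (-1 * t)) by ring, norm_neg, norm_mul, norm_mul,
        Real.norm_of_nonneg (Real.exp_pos _).le, Real.norm_eq_abs, Real.norm_eq_abs]
      have h3 := hM t ht
      gcongr
    by_contra hne
    have hpos := abs_pos.2 hne
    set J := |∫ t in Ioi (0:ℝ), Real.exp (-1 * t) * (φ (Real.exp (-t)) * H t)|
    have := hle (J / (2 * (M + 1))) (by positivity)
    have h5 : J / (2 * (M + 1)) * M < J := by
      rw [div_mul_eq_mul_div, div_lt_iff₀ (by positivity)]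
      nlinarith
    linarith
  have hnn : ∀ t, 0 < t → 0 ≤ Real.exp (-1 * t) * (φ (Real.exp (-t)) * H t) := by
    intro t ht
    have h1 := hexp1 t ht
    rw [hφe]
    have : 0 ≤ 1 - Real.exp (-t) := by linarith
    have e : Real.exp (-t) * (1 - Real.exp (-t)) * H t * H t = Real.exp (-t) * (1 - Real.exp (-t)) * (H t)^2 := by ring
    rw [e]; positivity
  have hae := (integral_eq_zero_iff_of_nonneg_ae ((ae_restrict_mem measurableSet_Ioi).mono fun t ht => hnn t ht) hJi).1 hJ0
  have hae2 : H =ᵐ[volume.restrict (Ioi 0)] (fun _ => (0:ℝ)) := by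
    filter_upwards [hae, ae_restrict_mem measurableSet_Ioi] with t ht ht0
    have h1 := hexp1 t ht0
    rw [hφe] at ht
    simp only [Pi.zero_apply, mul_eq_zero, (Real.exp_pos _).ne', false_or] at ht
    have : 1 - Real.exp (-t) ≠ 0 := by linarith
    tauto
  have := Measure.eqOn_open_of_ae_eq hae2 isOpen_Ioi hH continuousOn_const
  intro t ht
  exact this ht

lemma laplace_inj (H : ℝ → ℂ) (hH : ContinuousOn H (Ioi 0)) (M : ℝ) (hM : ∀ t, 0 < t → ‖H t‖ ≤ M)
    (hz : ∀ lam : ℝ, 0 < lam → ∫ t in Ioi (0:ℝ), (Real.exp (-lam * t) : ℂ) * H t = 0) :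
    ∀ t, 0 < t → H t = 0 := by
  have key : ∀ L : ℂ →L[ℝ] ℝ, (∀ z, |L z| ≤ ‖z‖) → ∀ t, 0 < t → L (H t) = 0 := by
    intro L hL
    refine laplace_inj_real _ (L.continuous.comp_continuousOn hH) M (fun t ht => (hL _).trans (hM t ht)) ?_
    intro n
    have hp : (0:ℝ) < n + 1 := by positivity
    have h1 := congrArg L (hz (n + 1) hp)
    rw [← L.integral_comp_comm (integrableOn_exp_mul _ hp H M hH hM)] at h1
    rw [map_zero] at h1
    refine Eq.trans ?_ h1
    refine integral_congr_ae (Eventually.of_forall fun t => ?_)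
    beta_reduce
    rw [← Complex.real_smul, map_smul, smul_eq_mul]
  intro t ht
  have a1 := key Complex.reCLM (fun z => Complex.abs_re_le_norm z) t ht
  have a2 := key Complex.imCLM (fun z => Complex.abs_im_le_norm z) t ht
  exact Complex.ext (by simpa using a1) (by simpa using a2)
lemma taylor2 (f f' f'' : ℝ → ℂ) (x h : ℝ) (hh : 0 < h) (hx : h < x)
    (h1 : ∀ y, 0 < y → HasDerivAt f (f' y) y) (h2 : ∀ y, 0 < y → HasDerivAt f' (f'' y) y)
    (hc : ContinuousOn f'' (Ioi 0)) :
    f (x + h) + f (x - h) - 2 * f x = ∫ s in (0:ℝ)..h, ((h - s : ℝ) : ℂ) * (f'' (x + s) + f'' (x - s)) := by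
  have hp : ∀ s ∈ uIcc 0 h, 0 < x + s ∧ 0 < x - s := by
    intro s hs
    rw [uIcc_of_le hh.le] at hs
    constructor <;> linarith [hs.1, hs.2]
  have d1 : ∀ s ∈ uIcc 0 h, HasDerivAt (fun s => f (x + s) + f (x - s)) (f' (x + s) - f' (x - s)) s := by
    intro s hs
    have a := (h1 _ (hp s hs).1).comp_const_add x s
    have b := (h1 _ (hp s hs).2).comp_const_sub x s
    exact (a.add b).congr_deriv (by ring)
  have d2 : ∀ s ∈ uIcc 0 h, HasDerivAt (fun s => f' (x + s) - f' (x - s)) (f'' (x + s) + f'' (x - s)) s := by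
    intro s hs
    have a := (h2 _ (hp s hs).1).comp_const_add x s
    have b := (h2 _ (hp s hs).2).comp_const_sub x s
    exact (a.sub b).congr_deriv (by ring)
  have d0 : ∀ s ∈ uIcc 0 h, HasDerivAt (fun s : ℝ => ((h - s : ℝ) : ℂ)) (-1) s := by
    intro s hs
    have := ((hasDerivAt_id s).const_sub h).ofReal_comp
    simpa using this
  have c1 : ContinuousOn (fun s => f' (x + s) - f' (x - s)) (uIcc 0 h) := fun s hs =>
    (d2 s hs).continuousAt.continuousWithinAt
  have c2 : ContinuousOn (fun s => f'' (x + s) + f'' (x - s)) (uIcc 0 h) := by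
    exact (hc.comp (by fun_prop) fun s hs => (hp s hs).1).add (hc.comp (by fun_prop) fun s hs => (hp s hs).2)
  have e1 := intervalIntegral.integral_mul_deriv_eq_deriv_mul d0 d2 (by simp) c2.intervalIntegrable
  have e2 := intervalIntegral.integral_eq_sub_of_hasDerivAt d1 c1.intervalIntegrable
  rw [e1]
  simp only [neg_mul, one_mul, intervalIntegral.integral_neg, e2]
  simp
  ring

/-- truncated integrals -/
lemma trunc_tendsto (F : ℝ → ℂ) (hF : IntegrableOn F (Ioi 0)) :
    Tendsto (fun n : ℕ => ∫ t in (1 / ((n:ℝ) + 1))..((n:ℝ) + 1), F t) atTop (nhds (∫ t in Ioi (0:ℝ), F t)) := by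
  have ha : Tendsto (fun n : ℕ => 1 / ((n:ℝ) + 1)) atTop (nhds 0) := tendsto_one_div_add_atTop_nhds_zero_nat
  have hb : Tendsto (fun n : ℕ => (n:ℝ) + 1) atTop atTop :=
    tendsto_atTop_add_const_right _ _ tendsto_natCast_atTop_atTop
  have hc : AECover (volume.restrict (Ioi (0:ℝ))) atTop (fun n : ℕ => Ioi (1 / ((n:ℝ) + 1)) ∩ Iic ((n:ℝ) + 1)) :=
    (aecover_Ioi_of_Ioi ha).inter (aecover_Iic hb)
  refine (hc.integral_tendsto_of_countably_generated hF).congr fun n => ?_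
  have hn : (0:ℝ) < 1 / ((n:ℝ) + 1) := by positivity
  have hle : 1 / ((n:ℝ) + 1) ≤ (n:ℝ) + 1 := by
    have : (0:ℝ) ≤ n := Nat.cast_nonneg n
    rw [div_le_iff₀ (by positivity)]; nlinarith
  rw [intervalIntegral.integral_of_le hle, Measure.restrict_restrict (measurableSet_Ioi.inter measurableSet_Iic)]
  congr 2
  ext t
  simp only [mem_inter_iff, mem_Ioi, mem_Iic, mem_Ioc]
  constructor
  · rintro ⟨⟨a, b⟩, c⟩; exact ⟨a, b⟩
  · rintro ⟨a, b⟩; exact ⟨⟨a, b⟩, hn.trans a⟩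

lemma laplace_ode (v vx vt : ℝ → ℝ → ℂ) (q : ℝ → ℝ) (lam : ℝ) (hlam : 0 < lam)
    (hqc : ContinuousOn q (Ioi 0))
    (hx : ∀ x t, 0 < x → 0 < t → HasDerivAt (fun y => v y t) (vx x t) x)
    (hxx : ∀ x t, 0 < x → 0 < t → HasDerivAt (fun y => vx y t) ((q x : ℂ) * vt x t) x)
    (ht : ∀ x t, 0 < x → 0 < t → HasDerivAt (fun s => v x s) (vt x t) t)
    (hcont : ContinuousOn (fun p : ℝ × ℝ => vt p.1 p.2) (Ioi 0 ×ˢ Ioi 0))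
    (hb : ∀ a b, 0 < a → ∃ M, ∀ x ∈ Icc a b, ∀ t, 0 < t → ‖v x t‖ ≤ M)
    (h0 : ∀ x, 0 < x → Tendsto (fun t => v x t) (nhdsWithin 0 (Ioi 0)) (nhds 0))
    (V : ℝ → ℂ) (hV : ∀ x, V x = ∫ t in Ioi (0:ℝ), (Real.exp (-lam * t) : ℂ) * v x t) :
    ContinuousOn V (Ioi 0) ∧
    ∀ x h, 0 < h → h < x → V (x + h) + V (x - h) - 2 * V x =
      lam * ∫ s in (0:ℝ)..h, ((h - s : ℝ) : ℂ) * ((q (x + s) : ℂ) * V (x + s) + (q (x - s) : ℂ) * V (x - s)) := by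
  have hvc : ∀ x, 0 < x → ContinuousOn (fun t => v x t) (Ioi 0) := fun x hx' t ht' =>
    (ht x t hx' ht').continuousAt.continuousWithinAt
  have hvi : ∀ x, 0 < x → IntegrableOn (fun t => (Real.exp (-lam * t) : ℂ) * v x t) (Ioi 0) := by
    intro x hx'
    obtain ⟨M, hM⟩ := hb x x hx'
    exact integrableOn_exp_mul lam hlam _ M (hvc x hx') (fun t ht' => hM x ⟨le_rfl, le_rfl⟩ t ht')
  have hVe : V = fun x => ∫ t in Ioi (0:ℝ), (Real.exp (-lam * t) : ℂ) * v x t := funext hV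
  constructor
  · intro x hx'
    have hx' : 0 < x := hx'
    refine ContinuousAt.continuousWithinAt ?_
    obtain ⟨M, hM⟩ := hb (x / 2) (x + 1) (by linarith)
    have hnh : Icc (x / 2) (x + 1) ∈ nhds x := Icc_mem_nhds (by linarith) (by linarith)
    rw [hVe]
    refine continuousAt_of_dominated (bound := fun t => M * Real.exp (-lam * t)) ?_ ?_ ?_ ?_
    · filter_upwards [hnh] with y hy
      exact (hvi y (by linarith [hy.1])).aestronglyMeasurable
    · filter_upwards [hnh] with y hy
      refine (ae_restrict_mem measurableSet_Ioi).mono fun t ht' => ?_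
      rw [norm_mul, Complex.norm_real, Real.norm_of_nonneg (Real.exp_pos _).le, mul_comm]
      exact mul_le_mul_of_nonneg_right (hM y hy t ht') (Real.exp_pos _).le
    · exact (integrableOn_exp_mul_Ioi (by linarith : -lam < 0) 0).const_mul M
    · refine (ae_restrict_mem measurableSet_Ioi).mono fun t ht' => ?_
      exact continuousAt_const.mul (hx x t hx' ht').continuousAt
  intro x h hh hxh
  obtain ⟨M, hM⟩ := hb (x - h) (x + h) (by linarith)
  have hM0 : 0 ≤ M := (norm_nonneg _).trans (hM x ⟨by linarith, by linarith⟩ 1 one_pos)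
  set ε : ℕ → ℝ := fun n => 1 / ((n:ℝ) + 1) with hε
  set T : ℕ → ℝ := fun n => (n:ℝ) + 1 with hT
  have hεp : ∀ n, 0 < ε n := fun n => by simp only [hε]; positivity
  have hTp : ∀ n, 0 < T n := fun n => by simp only [hT]; positivity
  have hεT : ∀ n, ε n ≤ T n := fun n => by
    have : (0:ℝ) ≤ n := Nat.cast_nonneg n
    simp only [hε, hT]
    rw [div_le_iff₀ (by positivity)]; nlinarith
  have hpos : ∀ n, ∀ t ∈ uIcc (ε n) (T n), 0 < t := fun n t ht' => by
    rw [uIcc_of_le (hεT n)] at ht'; exact lt_of_lt_of_le (hεp n) ht'.1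
  have hpx : ∀ s ∈ uIcc 0 h, 0 < x + s ∧ 0 < x - s := by
    intro s hs
    rw [uIcc_of_le hh.le] at hs
    constructor <;> linarith [hs.1, hs.2]
  set G : ℕ → ℝ → ℂ := fun n y => ∫ t in (ε n)..(T n), (Real.exp (-lam * t) : ℂ) * vt y t with hG
  have hexpd : ∀ t : ℝ, HasDerivAt (fun t : ℝ => (Real.exp (-lam * t) : ℂ)) ((-lam * Real.exp (-lam * t) : ℝ) : ℂ) t := by
    intro t
    have : HasDerivAt (fun t : ℝ => Real.exp (-lam * t)) (-lam * Real.exp (-lam * t)) t := by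
      have := ((hasDerivAt_id t).const_mul (-lam)).exp
      simpa [mul_comm] using this
    exact this.ofReal_comp
  have hGe : ∀ n y, 0 < y → G n y = Real.exp (-lam * T n) * v y (T n) - Real.exp (-lam * ε n) * v y (ε n)
      + lam * ∫ t in (ε n)..(T n), (Real.exp (-lam * t) : ℂ) * v y t := by
    intro n y hy
    have c : ContinuousOn (fun t => vt y t) (uIcc (ε n) (T n)) :=
      hcont.comp (f := fun t => (y, t)) (by fun_prop) (fun t ht' => ⟨hy, hpos n t ht'⟩)
    have := intervalIntegral.integral_mul_deriv_eq_deriv_mul (u := fun t : ℝ => (Real.exp (-lam * t) : ℂ))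
      (a := ε n) (b := T n) (fun t _ => hexpd t) (fun t ht' => ht y t hy (hpos n t ht'))
      (Continuous.intervalIntegrable (by fun_prop) _ _) c.intervalIntegrable
    simp only [hG]
    rw [this, ← intervalIntegral.integral_const_mul, sub_eq_add_neg, ← intervalIntegral.integral_neg]
    congr 2
    ext t
    push_cast
    ring
  have hεT0 : Tendsto ε atTop (nhdsWithin 0 (Ioi 0)) :=
    tendsto_nhdsWithin_iff.2 ⟨tendsto_one_div_add_atTop_nhds_zero_nat, Eventually.of_forall hεp⟩
  have hTt : Tendsto T atTop atTop := tendsto_atTop_add_const_right _ _ tendsto_natCast_atTop_atTop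
  have hexpT : Tendsto (fun n => Real.exp (-lam * T n)) atTop (nhds 0) := by
    refine Real.tendsto_exp_atBot.comp ?_
    exact hTt.const_mul_atTop_of_neg (by linarith)
  have hexple : ∀ t, 0 < t → ‖(Real.exp (-lam * t) : ℂ)‖ ≤ 1 := by
    intro t ht'
    rw [Complex.norm_real, Real.norm_of_nonneg (Real.exp_pos _).le, Real.exp_le_one_iff]
    nlinarith
  have hGlim : ∀ y ∈ Icc (x - h) (x + h), Tendsto (fun n => G n y) atTop (nhds (lam * V y)) := by
    intro y hy
    have hy0 : 0 < y := by linarith [hy.1]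
    have t1 : Tendsto (fun n => (Real.exp (-lam * T n) : ℂ) * v y (T n)) atTop (nhds 0) := by
      refine squeeze_zero_norm (a := fun n => Real.exp (-lam * T n) * M) ?_ (by simpa using hexpT.mul_const M)
      intro n
      rw [norm_mul, Complex.norm_real, Real.norm_of_nonneg (Real.exp_pos _).le]
      exact mul_le_mul_of_nonneg_left (hM y hy _ (hTp n)) (Real.exp_pos _).le
    have t2 : Tendsto (fun n => (Real.exp (-lam * ε n) : ℂ) * v y (ε n)) atTop (nhds 0) := by
      have b1 := ((h0 y hy0).comp hεT0).norm
      rw [norm_zero] at b1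
      refine squeeze_zero_norm (fun n => ?_) b1
      rw [norm_mul]
      exact mul_le_of_le_one_left (norm_nonneg _) (hexple _ (hεp n))
    have t3 := (trunc_tendsto _ (hvi y hy0)).const_mul (lam : ℂ)
    have := (t1.sub t2).add t3
    rw [sub_zero, zero_add, ← hV y] at this
    refine this.congr fun n => ?_
    rw [hGe n y hy0]
  have hGb : ∀ n, ∀ y ∈ Icc (x - h) (x + h), ‖G n y‖ ≤ 3 * M := by
    intro n y hy
    have hy0 : 0 < y := by linarith [hy.1]
    rw [hGe n y hy0]
    have b1 : ‖(Real.exp (-lam * T n) : ℂ) * v y (T n)‖ ≤ M := by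
      rw [norm_mul]
      exact (mul_le_of_le_one_left (norm_nonneg _) (hexple _ (hTp n))).trans (hM y hy _ (hTp n))
    have b2 : ‖(Real.exp (-lam * ε n) : ℂ) * v y (ε n)‖ ≤ M := by
      rw [norm_mul]
      exact (mul_le_of_le_one_left (norm_nonneg _) (hexple _ (hεp n))).trans (hM y hy _ (hεp n))
    have b3 : ‖(lam : ℂ) * ∫ t in (ε n)..(T n), (Real.exp (-lam * t) : ℂ) * v y t‖ ≤ M := by
      rw [norm_mul, Complex.norm_real, Real.norm_of_nonneg hlam.le, intervalIntegral.integral_of_le (hεT n)]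
      have i1 : IntegrableOn (fun t => M * Real.exp (-lam * t)) (Ioi 0) :=
        (integrableOn_exp_mul_Ioi (by linarith : -lam < 0) 0).const_mul M
      have sub : Ioc (ε n) (T n) ⊆ Ioi 0 := fun t ht' => (hεp n).trans ht'.1
      have : ‖∫ t in Ioc (ε n) (T n), (Real.exp (-lam * t) : ℂ) * v y t‖ ≤ ∫ t in Ioc (ε n) (T n), M * Real.exp (-lam * t) := by
        refine norm_integral_le_of_norm_le (i1.mono_set sub) ?_
        refine (ae_restrict_mem measurableSet_Ioc).mono fun t ht' => ?_
        rw [norm_mul, Complex.norm_real, Real.norm_of_nonneg (Real.exp_pos _).le, mul_comm]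
        exact mul_le_mul_of_nonneg_right (hM y hy t (sub ht')) (Real.exp_pos _).le
      have h2 : ∫ t in Ioc (ε n) (T n), M * Real.exp (-lam * t) ≤ ∫ t in Ioi 0, M * Real.exp (-lam * t) := by
        refine setIntegral_mono_set i1 (Eventually.of_forall fun t => ?_) (LE.le.eventuallyLE sub)
        exact mul_nonneg hM0 (Real.exp_pos _).le
      have h3 : ∫ t in Ioi (0:ℝ), M * Real.exp (-lam * t) = M / lam := by
        rw [integral_const_mul, integral_exp_mul_Ioi (by linarith)]; simp; rfl
      calc _ ≤ lam * (M / lam) := by gcongr; linarith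
        _ = M := by field_simp
    calc _ ≤ ‖(Real.exp (-lam * T n) : ℂ) * v y (T n)‖ + ‖(Real.exp (-lam * ε n) : ℂ) * v y (ε n)‖ + _ :=
          (norm_add_le _ _).trans (add_le_add_left (norm_sub_le _ _) _)
      _ ≤ M + M + M := by gcongr
      _ = _ := by ring
  have hGc : ∀ n, ContinuousOn (G n) (Ioi 0) := by
    intro n y hy
    have hy : 0 < y := hy
    refine ContinuousAt.continuousWithinAt ?_
    have hK : IsCompact (Icc (y / 2) (y + 1) ×ˢ uIcc (ε n) (T n)) := isCompact_Icc.prod isCompact_uIcc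
    have hKs : Icc (y / 2) (y + 1) ×ˢ uIcc (ε n) (T n) ⊆ Ioi 0 ×ˢ Ioi 0 := fun p hp =>
      ⟨lt_of_lt_of_le (by linarith) hp.1.1, hpos n _ hp.2⟩
    obtain ⟨C, hC⟩ := hK.exists_bound_of_continuousOn (hcont.mono hKs)
    have hnh : Icc (y / 2) (y + 1) ∈ nhds y := Icc_mem_nhds (by linarith) (by linarith)
    refine intervalIntegral.continuousAt_of_dominated_interval (bound := fun _ => C) ?_ ?_ ?_ ?_
    · filter_upwards [hnh] with z hz
      have hz0 : 0 < z := by linarith [hz.1]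
      have c : ContinuousOn (fun t => (Real.exp (-lam * t) : ℂ) * vt z t) (uIcc (ε n) (T n)) :=
        ContinuousOn.mul (by fun_prop)
          (hcont.comp (f := fun t => (z, t)) (by fun_prop) (fun t ht' => ⟨hz0, hpos n t ht'⟩))
      exact (c.mono uIoc_subset_uIcc).aestronglyMeasurable measurableSet_uIoc
    · filter_upwards [hnh] with z hz
      refine Eventually.of_forall fun t ht' => ?_
      have ht'' := uIoc_subset_uIcc ht'
      rw [norm_mul]
      exact (mul_le_of_le_one_left (norm_nonneg _) (hexple _ (hpos n t ht''))).trans (hC (z, t) ⟨hz, ht''⟩)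
    · simp
    · refine Eventually.of_forall fun t ht' => ?_
      have ht'' := hpos n t (uIoc_subset_uIcc ht')
      refine continuousAt_const.mul ?_
      have : ContinuousAt (fun p : ℝ × ℝ => vt p.1 p.2) (y, t) :=
        hcont.continuousAt ((isOpen_Ioi.prod isOpen_Ioi).mem_nhds ⟨hy, ht''⟩)
      exact ContinuousAt.comp (f := fun z => (z, t)) this (by fun_prop)
  have hid : ∀ n, (∫ t in (ε n)..(T n), (Real.exp (-lam * t) : ℂ) * (v (x + h) t + v (x - h) t - 2 * v x t)) =
      ∫ s in (0:ℝ)..h, ((h - s : ℝ) : ℂ) * ((q (x + s) : ℂ) * G n (x + s) + (q (x - s) : ℂ) * G n (x - s)) := by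
    intro n
    have q1 : ContinuousOn (fun s => q (x + s)) (uIcc 0 h) := hqc.comp (by fun_prop) fun s hs => (hpx s hs).1
    have q2 : ContinuousOn (fun s => q (x - s)) (uIcc 0 h) := hqc.comp (by fun_prop) fun s hs => (hpx s hs).2
    have s1 : ∀ t ∈ uIcc (ε n) (T n), (Real.exp (-lam * t) : ℂ) * (v (x + h) t + v (x - h) t - 2 * v x t) =
        ∫ s in (0:ℝ)..h, (Real.exp (-lam * t) : ℂ) * (((h - s : ℝ) : ℂ) * ((q (x + s) : ℂ) * vt (x + s) t + (q (x - s) : ℂ) * vt (x - s) t)) := by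
      intro t ht'
      have ht0 := hpos n t ht'
      have hvt : ContinuousOn (fun y => vt y t) (Ioi 0) :=
        hcont.comp (f := fun y => (y, t)) (by fun_prop) (fun y hy => ⟨hy, ht0⟩)
      rw [intervalIntegral.integral_const_mul]
      congr 1
      exact taylor2 (fun y => v y t) (fun y => vx y t) (fun y => (q y : ℂ) * vt y t) x h hh hxh
        (fun y hy => hx y t hy ht0) (fun y hy => hxx y t hy ht0)
        ((Complex.continuous_ofReal.comp_continuousOn hqc).mul hvt)
    rw [intervalIntegral.integral_congr s1]
    rw [intervalIntegral_intervalIntegral_swap]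
    · refine intervalIntegral.integral_congr fun s hs => ?_
      have g : ∀ y, 0 < y → IntervalIntegrable (fun t => (Real.exp (-lam * t) : ℂ) * vt y t) volume (ε n) (T n) := by
        intro y hy
        apply ContinuousOn.intervalIntegrable
        exact ContinuousOn.mul (by fun_prop)
          (hcont.comp (f := fun t => (y, t)) (by fun_prop) (fun t ht' => ⟨hy, hpos n t ht'⟩))
      have g1 := (g _ (hpx s hs).1).const_mul (q (x + s) : ℂ)
      have g2 := (g _ (hpx s hs).2).const_mul (q (x - s) : ℂ)
      simp only [hG]
      rw [← intervalIntegral.integral_const_mul, ← intervalIntegral.integral_const_mul,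
        ← intervalIntegral.integral_add g1 g2, ← intervalIntegral.integral_const_mul]
      congr 1
      ext t
      ring
    · have hsub : uIoc (ε n) (T n) ×ˢ uIoc 0 h ⊆ uIcc (ε n) (T n) ×ˢ uIcc 0 h :=
        prod_mono uIoc_subset_uIcc uIoc_subset_uIcc
      refine IntegrableOn.mono_set ?_ hsub
      refine ContinuousOn.integrableOn_compact (isCompact_uIcc.prod isCompact_uIcc) ?_
      have w1 : ContinuousOn (fun p : ℝ × ℝ => vt (x + p.2) p.1) (uIcc (ε n) (T n) ×ˢ uIcc 0 h) :=
        hcont.comp (f := fun p : ℝ × ℝ => (x + p.2, p.1)) (by fun_prop)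
          (fun p hp => ⟨(hpx _ hp.2).1, hpos n _ hp.1⟩)
      have w2 : ContinuousOn (fun p : ℝ × ℝ => vt (x - p.2) p.1) (uIcc (ε n) (T n) ×ˢ uIcc 0 h) :=
        hcont.comp (f := fun p : ℝ × ℝ => (x - p.2, p.1)) (by fun_prop)
          (fun p hp => ⟨(hpx _ hp.2).2, hpos n _ hp.1⟩)
      have w3 : ContinuousOn (fun p : ℝ × ℝ => (q (x + p.2) : ℂ)) (uIcc (ε n) (T n) ×ˢ uIcc 0 h) :=
        Complex.continuous_ofReal.comp_continuousOn (q1.comp continuousOn_snd fun p hp => hp.2)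
      have w4 : ContinuousOn (fun p : ℝ × ℝ => (q (x - p.2) : ℂ)) (uIcc (ε n) (T n) ×ˢ uIcc 0 h) :=
        Complex.continuous_ofReal.comp_continuousOn (q2.comp continuousOn_snd fun p hp => hp.2)
      exact ContinuousOn.mul (by fun_prop) (ContinuousOn.mul (by fun_prop) ((w3.mul w1).add (w4.mul w2)))
  have hL : Tendsto (fun n => ∫ t in (ε n)..(T n), (Real.exp (-lam * t) : ℂ) * (v (x + h) t + v (x - h) t - 2 * v x t)) atTop
      (nhds (V (x + h) + V (x - h) - 2 * V x)) := by
    have i1 := hvi (x + h) (by linarith)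
    have i2 := hvi (x - h) (by linarith)
    have i3 := (hvi x (by linarith)).const_mul 2
    have := trunc_tendsto _ ((i1.add i2).sub i3)
    have e : ∫ t in Ioi (0:ℝ), ((fun t => (Real.exp (-lam * t) : ℂ) * v (x + h) t) + (fun t => (Real.exp (-lam * t) : ℂ) * v (x - h) t) - fun t => 2 * ((Real.exp (-lam * t) : ℂ) * v x t)) t
       = V (x + h) + V (x - h) - 2 * V x := by
      rw [integral_sub' (i1.add i2) i3, integral_add' i1 i2, integral_const_mul, hV, hV, hV]
    rw [e] at this
    refine this.congr fun n => ?_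
    congr 1
    ext t
    simp only [Pi.add_apply, Pi.sub_apply]
    ring
  have hR : Tendsto (fun n => ∫ s in (0:ℝ)..h, ((h - s : ℝ) : ℂ) * ((q (x + s) : ℂ) * G n (x + s) + (q (x - s) : ℂ) * G n (x - s))) atTop
      (nhds (∫ s in (0:ℝ)..h, ((h - s : ℝ) : ℂ) * ((q (x + s) : ℂ) * (lam * V (x + s)) + (q (x - s) : ℂ) * (lam * V (x - s))))) := by
    have q1 : ContinuousOn (fun s => q (x + s)) (uIcc 0 h) := hqc.comp (by fun_prop) fun s hs => (hpx s hs).1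
    have q2 : ContinuousOn (fun s => q (x - s)) (uIcc 0 h) := hqc.comp (by fun_prop) fun s hs => (hpx s hs).2
    refine intervalIntegral.tendsto_integral_filter_of_dominated_convergence
      (fun s => |h - s| * (|q (x + s)| * (3 * M) + |q (x - s)| * (3 * M))) ?_ ?_ ?_ ?_
    · refine Eventually.of_forall fun n => ?_
      have cc : ContinuousOn (fun s => ((h - s : ℝ) : ℂ) * ((q (x + s) : ℂ) * G n (x + s) + (q (x - s) : ℂ) * G n (x - s))) (uIcc 0 h) := by
        refine ContinuousOn.mul (by fun_prop) ?_
        exact ((Complex.continuous_ofReal.comp_continuousOn q1).mul ((hGc n).comp (by fun_prop) fun s hs => (hpx s hs).1)).add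
          ((Complex.continuous_ofReal.comp_continuousOn q2).mul ((hGc n).comp (by fun_prop) fun s hs => (hpx s hs).2))
      exact (cc.mono uIoc_subset_uIcc).aestronglyMeasurable measurableSet_uIoc
    · refine Eventually.of_forall fun n => Eventually.of_forall fun s hs => ?_
      rw [uIoc_of_le hh.le] at hs
      have b1 := hGb n (x + s) ⟨by linarith [hs.1], by linarith [hs.2]⟩
      have b2 := hGb n (x - s) ⟨by linarith [hs.2], by linarith [hs.1]⟩
      rw [norm_mul, Complex.norm_real, Real.norm_eq_abs]
      gcongr
      refine (norm_add_le _ _).trans ?_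
      rw [norm_mul, norm_mul, Complex.norm_real, Complex.norm_real, Real.norm_eq_abs, Real.norm_eq_abs]
      gcongr
    · apply ContinuousOn.intervalIntegrable
      exact (by fun_prop : ContinuousOn (fun s => |h - s|) (uIcc 0 h)).mul
        ((q1.abs.mul continuousOn_const).add (q2.abs.mul continuousOn_const))
    · refine Eventually.of_forall fun s hs => ?_
      rw [uIoc_of_le hh.le] at hs
      have b1 := hGlim (x + s) ⟨by linarith [hs.1], by linarith [hs.2]⟩
      have b2 := hGlim (x - s) ⟨by linarith [hs.2], by linarith [hs.1]⟩
      exact ((b1.const_mul _).add (b2.const_mul _)).const_mul _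
  rw [← intervalIntegral.integral_const_mul]
  simp only [hid] at hL
  rw [tendsto_nhds_unique hL hR]
  congr 1
  ext s
  ring
noncomputable def Kc (α : ℝ) : ℝ := α ^ α / (2 ^ α * Real.Gamma (α / 2))

noncomputable def Kx (α x t : ℝ) : ℝ :=
  Kc α * t ^ (-(α / 2 + 1)) * Real.exp (-(α ^ 2) * x ^ (2 / α) / (4 * t)) *
    (1 - α / (2 * t) * x ^ (2 / α))

noncomputable def Ktd (α x t : ℝ) : ℝ :=
  Kc α * x * t ^ (-(α / 2 + 1)) * Real.exp (-(α ^ 2) * x ^ (2 / α) / (4 * t)) *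
    (-(α / 2 + 1) / t + α ^ 2 * x ^ (2 / α) / (4 * t ^ 2))

lemma Kc_pos (α : ℝ) (hα : 0 < α) : 0 < Kc α := by
  have := Real.Gamma_pos_of_pos (half_pos hα)
  unfold Kc; positivity

lemma Kker_eq (α x t : ℝ) : Kker α x t = Kc α * x * t ^ (-(α / 2 + 1)) *
    Real.exp (-(α ^ 2) * x ^ (2 / α) / (4 * t)) := rfl

lemma hasDerivAt_rpow' (p x : ℝ) (hx : 0 < x) : HasDerivAt (fun y : ℝ => y ^ p) (p * (x ^ p / x)) x := by
  have := Real.hasDerivAt_rpow_const (p := p) (Or.inl hx.ne')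
  rwa [Real.rpow_sub_one hx.ne'] at this

lemma hasDerivAt_E (α x t : ℝ) (hx : 0 < x) (ht : 0 < t) :
    HasDerivAt (fun y : ℝ => Real.exp (-(α ^ 2) * y ^ (2 / α) / (4 * t)))
      (Real.exp (-(α ^ 2) * x ^ (2 / α) / (4 * t)) * (-(α ^ 2) * (2 / α * (x ^ (2 / α) / x)) / (4 * t))) x :=
  (((hasDerivAt_rpow' (2 / α) x hx).const_mul _).div_const _).exp

lemma Kker_dx (α x t : ℝ) (hα : 0 < α) (hx : 0 < x) (ht : 0 < t) :
    HasDerivAt (fun y => Kker α y t) (Kx α x t) x := by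
  have h := (((hasDerivAt_id x).const_mul (Kc α)).mul_const (t ^ (-(α / 2 + 1)))).mul (hasDerivAt_E α x t hx ht)
  refine h.congr_deriv ?_
  unfold Kx
  simp only [id]
  field_simp
  ring

lemma Kker_dxx (α x t : ℝ) (hα : 0 < α) (hx : 0 < x) (ht : 0 < t) :
    HasDerivAt (fun y => Kx α y t) (x ^ (2 / α - 2) * Ktd α x t) x := by
  have h := ((hasDerivAt_E α x t hx ht).const_mul (Kc α * t ^ (-(α / 2 + 1)))).mul
    (((hasDerivAt_rpow' (2 / α) x hx).const_mul (α / (2 * t))).const_sub 1)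
  refine h.congr_deriv ?_
  unfold Ktd
  rw [Real.rpow_sub hx, show x ^ (2:ℝ) = x ^ 2 by norm_cast]
  field_simp
  ring

lemma Kker_dt (α x t : ℝ) (hα : 0 < α) (hx : 0 < x) (ht : 0 < t) :
    HasDerivAt (fun s => Kker α x s) (Ktd α x t) t := by
  have h1 : HasDerivAt (fun s : ℝ => -(α ^ 2) * x ^ (2 / α) / (4 * s))
      (α ^ 2 * x ^ (2 / α) / (4 * t ^ 2)) t := by
    have := ((hasDerivAt_id t).const_mul 4).fun_inv (by simpa using ht.ne') |>.const_mul (-(α ^ 2) * x ^ (2 / α))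
    refine (this.congr_deriv ?_)
    simp only [id]
    field_simp
  have h := ((hasDerivAt_rpow' (-(α / 2 + 1)) t ht).const_mul (Kc α * x)).mul h1.exp
  refine h.congr_deriv ?_
  unfold Ktd
  field_simp

lemma Ktd_cont (α : ℝ) (hα : 0 < α) : ContinuousOn (fun p : ℝ × ℝ => Ktd α p.1 p.2) (Ioi 0 ×ˢ Ioi 0) := by
  intro p hp
  have h1 : p.1 ≠ 0 := (ne_of_gt hp.1)
  have h2 : p.2 ≠ 0 := (ne_of_gt hp.2)
  refine ContinuousAt.continuousWithinAt ?_
  have a : ContinuousAt (fun p : ℝ × ℝ => p.1 ^ (2 / α)) p := continuousAt_fst.rpow_const (Or.inl h1)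
  have b : ContinuousAt (fun p : ℝ × ℝ => p.2 ^ (-(α / 2 + 1))) p := continuousAt_snd.rpow_const (Or.inl h2)
  unfold Ktd
  have h3 : 4 * p.2 ≠ 0 := by simpa using h2
  have h4 : 4 * p.2 ^ 2 ≠ 0 := by simpa using h2
  have c1 : ContinuousAt (fun p : ℝ × ℝ => -(α ^ 2) * p.1 ^ (2 / α) / (4 * p.2)) p :=
    (continuousAt_const.mul a).div (continuousAt_const.mul continuousAt_snd) h3
  have c2 : ContinuousAt (fun p : ℝ × ℝ => α ^ 2 * p.1 ^ (2 / α) / (4 * p.2 ^ 2)) p :=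
    (continuousAt_const.mul a).div (continuousAt_const.mul (continuousAt_snd.pow 2)) h4
  have c3 : ContinuousAt (fun p : ℝ × ℝ => -(α / 2 + 1) / p.2) p :=
    continuousAt_const.div continuousAt_snd h2
  exact (((continuousAt_const.mul continuousAt_fst).mul b).mul c1.rexp).mul (c3.add c2)

lemma Kker_nonneg (α x t : ℝ) (hα : 0 < α) (hx : 0 < x) (ht : 0 < t) : 0 ≤ Kker α x t := by
  have := Kc_pos α hα
  rw [Kker_eq]; positivity

lemma Kker_bound (α a b : ℝ) (hα : 0 < α) (ha : 0 < a) :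
    ∃ M, ∀ x ∈ Icc a b, ∀ t, 0 < t → |Kker α x t| ≤ M := by
  have hc := Kc_pos α hα
  set m := α / 2 + 1 with hm
  have hm0 : 0 < m := by positivity
  set B := α ^ 2 * a ^ (2 / α) / 4 with hB
  have hB0 : 0 < B := by positivity
  refine ⟨Kc α * |b| * (m / B) ^ m, fun x hx t ht => ?_⟩
  have hx0 : 0 < x := ha.trans_le hx.1
  rw [abs_of_nonneg (Kker_nonneg α x t hα hx0 ht), Kker_eq, mul_assoc]
  have h1 : Real.exp (-(α ^ 2) * x ^ (2 / α) / (4 * t)) ≤ Real.exp (-(B / t)) := by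
    apply Real.exp_le_exp.2
    have : a ^ (2 / α) ≤ x ^ (2 / α) := Real.rpow_le_rpow ha.le hx.1 (by positivity)
    have h2 : B / t ≤ α ^ 2 * x ^ (2 / α) / 4 / t := by rw [hB]; gcongr
    have : -(α ^ 2) * x ^ (2 / α) / (4 * t) = - (α ^ 2 * x ^ (2 / α) / 4 / t) := by field_simp
    linarith
  have h3 : t ^ (-m) * Real.exp (-(B / t)) ≤ (m / B) ^ m := by
    have e1 : B / (t * m) ≤ Real.exp (B / (t * m)) := by linarith [Real.add_one_le_exp (B / (t * m))]
    have e2 : (B / (t * m)) ^ m ≤ Real.exp (B / t) := by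
      calc (B / (t * m)) ^ m ≤ Real.exp (B / (t * m)) ^ m := Real.rpow_le_rpow (by positivity) e1 hm0.le
        _ = Real.exp (B / t) := by rw [← Real.exp_mul]; congr 1; field_simp
    have e3 : t ^ (-m) = (B / (t * m)) ^ m * (m / B) ^ m := by
      rw [← Real.mul_rpow (by positivity) (by positivity), Real.rpow_neg ht.le, ← Real.inv_rpow ht.le]
      congr 1; field_simp
    rw [e3, Real.exp_neg]
    have : 0 < Real.exp (B / t) := Real.exp_pos _
    rw [mul_inv_le_iff₀ this, mul_comm]
    gcongr
  have hxb : x ≤ |b| := hx.2.trans (le_abs_self b)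
  calc _ ≤ Kc α * |b| * (t ^ (-m) * Real.exp (-(B / t))) := by gcongr
    _ ≤ _ := by gcongr

lemma Kker_init (α x : ℝ) (hα : 0 < α) (hx : 0 < x) :
    Tendsto (fun t => Kker α x t) (nhdsWithin 0 (Ioi 0)) (nhds 0) := by
  have hB : 0 < α ^ 2 * x ^ (2 / α) / 4 := by positivity
  have h1 := (tendsto_rpow_mul_exp_neg_mul_atTop_nhds_zero (α / 2 + 1) _ hB).comp tendsto_inv_nhdsGT_zero
  have h2 := h1.const_mul (Kc α * x)
  rw [mul_zero] at h2
  refine h2.congr' ?_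
  filter_upwards [self_mem_nhdsWithin] with t ht
  have ht : 0 < t := ht
  simp only [Function.comp]
  rw [Kker_eq, Real.inv_rpow ht.le, ← Real.rpow_neg ht.le, mul_assoc (Kc α * x)]
  congr 3
  field_simp

/-- scaling profile -/
noncomputable def prof (α r : ℝ) : ℝ :=
  1 / (2 ^ α * Real.Gamma (α / 2)) * (r ^ (-(α / 2 + 1)) * Real.exp (-(1 / 4) * r⁻¹))

lemma prof_aux (α : ℝ) (hα : 0 < α) :
    IntegrableOn (fun r : ℝ => r ^ (-(α / 2 + 1)) * Real.exp (-(1 / 4) * r⁻¹)) (Ioi 0) ∧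
    ∫ r in Ioi (0:ℝ), r ^ (-(α / 2 + 1)) * Real.exp (-(1 / 4) * r⁻¹) = 2 ^ α * Real.Gamma (α / 2) := by
  set g : ℝ → ℝ := fun y => y ^ (α / 2 - 1) * Real.exp (-(1 / 4 * y)) with hg
  have e : ∀ r ∈ Ioi (0:ℝ), (|(-1:ℝ)| * r ^ ((-1:ℝ) - 1)) • g (r ^ (-1:ℝ)) =
      r ^ (-(α / 2 + 1)) * Real.exp (-(1 / 4) * r⁻¹) := by
    intro r hr
    have hr : 0 < r := hr
    simp only [hg, smul_eq_mul, abs_neg, abs_one, one_mul]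
    rw [← Real.rpow_mul hr.le, ← mul_assoc, ← Real.rpow_add hr, Real.rpow_neg_one]
    congr 2 <;> ring
  have hi : IntegrableOn g (Ioi 0) := by
    have := Real.integral_rpow_mul_exp_neg_mul_Ioi (half_pos hα) (by norm_num : (0:ℝ) < 1 / 4)
    by_contra hn
    rw [integral_undef hn] at this
    have h2 := Real.Gamma_pos_of_pos (half_pos hα)
    have : 0 < (1 / (1 / 4 : ℝ)) ^ (α / 2) * Real.Gamma (α / 2) := by positivity
    linarith
  constructor
  · exact ((integrableOn_Ioi_comp_rpow_iff g (by norm_num : (-1:ℝ) ≠ 0)).2 hi).congr_fun e measurableSet_Ioi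
  · rw [← setIntegral_congr_fun measurableSet_Ioi e, integral_comp_rpow_Ioi g (by norm_num),
      Real.integral_rpow_mul_exp_neg_mul_Ioi (half_pos hα) (by norm_num : (0:ℝ) < 1 / 4)]
    congr 1
    rw [show (1 / (1 / 4) : ℝ) = 2 ^ (2:ℝ) by norm_num, ← Real.rpow_mul (by norm_num)]
    congr 1; ring

lemma prof_int (α : ℝ) (hα : 0 < α) : IntegrableOn (prof α) (Ioi 0) ∧ ∫ r in Ioi (0:ℝ), prof α r = 1 := by
  obtain ⟨h1, h2⟩ := prof_aux α hα
  constructor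
  · exact h1.const_mul _
  · unfold prof
    rw [integral_const_mul, h2]
    have := Real.Gamma_pos_of_pos (half_pos hα)
    field_simp

lemma prof_nonneg (α r : ℝ) (hα : 0 < α) (hr : 0 < r) : 0 ≤ prof α r := by
  have := Real.Gamma_pos_of_pos (half_pos hα)
  unfold prof; positivity

lemma Kker_scale (α x r : ℝ) (hα : 0 < α) (hx : 0 < x) (hr : 0 < r) :
    α ^ 2 * x ^ (2 / α) * Kker α x (α ^ 2 * x ^ (2 / α) * r) = prof α r := by
  have hG := Real.Gamma_pos_of_pos (half_pos hα)
  have hz : 0 < α ^ 2 * x ^ (2 / α) := by positivity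
  have e1 : (α ^ 2 * x ^ (2 / α)) ^ (-(α / 2 + 1)) = (α ^ α * x)⁻¹ * (α ^ 2 * x ^ (2 / α))⁻¹ := by
    rw [neg_add, Real.rpow_add hz, Real.rpow_neg_one, Real.rpow_neg hz.le,
      Real.mul_rpow (by positivity) (by positivity), ← Real.rpow_mul hx.le, ← Real.rpow_natCast, ← Real.rpow_mul hα.le]
    congr 3
    · congr 1; push_cast; ring
    · rw [show 2 / α * (α / 2) = 1 by field_simp, Real.rpow_one]
  rw [Kker_eq, Real.mul_rpow hz.le hr.le, e1]
  unfold prof Kc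
  have e2 : -(α ^ 2) * x ^ (2 / α) / (4 * (α ^ 2 * x ^ (2 / α) * r)) = -(1 / 4) * r⁻¹ := by
    field_simp
  rw [e2]
  have : 0 < α ^ α := by positivity
  field_simp

lemma Kker_integrable (α x : ℝ) (hα : 0 < α) (hx : 0 < x) :
    IntegrableOn (fun t => Kker α x t) (Ioi 0) := by
  have hz : 0 < α ^ 2 * x ^ (2 / α) := by positivity
  have h := (integrableOn_Ioi_comp_mul_left_iff (fun t => Kker α x t) 0 hz).1
  rw [mul_zero] at h
  apply h
  have : IntegrableOn (fun r => (α ^ 2 * x ^ (2 / α))⁻¹ * prof α r) (Ioi 0) :=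
    (prof_int α hα).1.const_mul (α ^ 2 * x ^ (2 / α))⁻¹
  refine this.congr_fun (fun r hr => ?_) measurableSet_Ioi
  show _ = _
  beta_reduce
  rw [← Kker_scale α x r hα hx hr]
  field_simp

lemma Kker_laplace (α x lam : ℝ) (hα : 0 < α) (hx : 0 < x) :
    ∫ t in Ioi (0:ℝ), (Real.exp (-lam * t) : ℂ) * (Kker α x t : ℂ) =
      ((∫ r in Ioi (0:ℝ), Real.exp (-lam * (α ^ 2 * x ^ (2 / α) * r)) * prof α r : ℝ) : ℂ) := by
  have hz : 0 < α ^ 2 * x ^ (2 / α) := by positivity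
  have h := integral_comp_mul_left_Ioi' (fun t => Real.exp (-lam * t) * Kker α x t) 0 hz
  rw [mul_zero] at h
  simp only [← Complex.ofReal_mul]
  rw [integral_complex_ofReal]
  congr 1
  rw [← h, smul_eq_mul, ← integral_const_mul]
  refine setIntegral_congr_fun measurableSet_Ioi fun r hr => ?_
  beta_reduce
  rw [← Kker_scale α x r hα hx hr]
  ring

lemma prof_laplace_tendsto (α lam : ℝ) (hα : 0 < α) (hlam : 0 < lam) :
    Tendsto (fun x : ℝ => ∫ r in Ioi (0:ℝ), Real.exp (-lam * (α ^ 2 * x ^ (2 / α) * r)) * prof α r)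
      (nhdsWithin 0 (Ioi 0)) (nhds 1) ∧
    Tendsto (fun x : ℝ => ∫ r in Ioi (0:ℝ), Real.exp (-lam * (α ^ 2 * x ^ (2 / α) * r)) * prof α r)
      atTop (nhds 0) := by
  obtain ⟨h1, h2⟩ := prof_int α hα
  have hp : 0 < 2 / α := by positivity
  have meas : ∀ x : ℝ, AEStronglyMeasurable (fun r => Real.exp (-lam * (α ^ 2 * x ^ (2 / α) * r)) * prof α r)
      (volume.restrict (Ioi 0)) := fun x =>
    (Continuous.aestronglyMeasurable (by fun_prop)).mul h1.aestronglyMeasurable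
  have bd : ∀ x : ℝ, 0 < x → ∀ᵐ r ∂(volume.restrict (Ioi (0:ℝ))),
      ‖Real.exp (-lam * (α ^ 2 * x ^ (2 / α) * r)) * prof α r‖ ≤ prof α r := by
    intro x hx
    refine (ae_restrict_mem measurableSet_Ioi).mono fun r hr => ?_
    have hr : 0 < r := hr
    have p := prof_nonneg α r hα hr
    rw [Real.norm_of_nonneg (by positivity)]
    refine mul_le_of_le_one_left p ?_
    rw [Real.exp_le_one_iff, neg_mul, neg_nonpos]
    positivity
  constructor
  · rw [← h2]
    refine tendsto_integral_filter_of_dominated_convergence (prof α) (Eventually.of_forall meas) ?_ h1 ?_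
    · filter_upwards [self_mem_nhdsWithin] with x hx using bd x hx
    · refine Eventually.of_forall fun r => ?_
      have c : ContinuousAt (fun x : ℝ => Real.exp (-lam * (α ^ 2 * x ^ (2 / α) * r)) * prof α r) 0 := by
        have : ContinuousAt (fun x : ℝ => x ^ (2 / α)) 0 := Real.continuousAt_rpow_const _ _ (Or.inr hp.le)
        fun_prop
      have := c.tendsto
      simp only [Real.zero_rpow hp.ne', mul_zero, zero_mul, Real.exp_zero, one_mul] at this
      exact this.mono_left nhdsWithin_le_nhds
  · suffices Tendsto (fun x : ℝ => ∫ r in Ioi (0:ℝ), Real.exp (-lam * (α ^ 2 * x ^ (2 / α) * r)) * prof α r)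
        atTop (nhds (∫ r in Ioi (0:ℝ), (0:ℝ))) by simpa using this
    refine tendsto_integral_filter_of_dominated_convergence (prof α) (Eventually.of_forall meas) ?_ h1 ?_
    · filter_upwards [eventually_gt_atTop 0] with x hx using bd x hx
    · refine (ae_restrict_mem measurableSet_Ioi).mono fun r hr => ?_
      have hr : 0 < r := hr
      have t1 : Tendsto (fun x : ℝ => α ^ 2 * x ^ (2 / α) * r) atTop atTop :=
        ((tendsto_rpow_atTop hp).const_mul_atTop (by positivity)).atTop_mul_const hr
      have t2 := Real.tendsto_exp_atBot.comp (t1.const_mul_atTop_of_neg (by linarith : -lam < 0))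
      simpa [Function.comp_def] using t2.mul_const (prof α r)
lemma q_cont (α : ℝ) : ContinuousOn (fun x : ℝ => x ^ (2 / α - 2)) (Ioi 0) :=
  fun x hx => (Real.continuousAt_rpow_const x _ (Or.inl (ne_of_gt hx))).continuousWithinAt

lemma K_ode (α lam : ℝ) (hα : 0 < α) (hlam : 0 < lam) (V : ℝ → ℂ)
    (hV : ∀ x, V x = ∫ t in Ioi (0:ℝ), (Real.exp (-lam * t) : ℂ) * (Kker α x t : ℂ)) :
    ContinuousOn V (Ioi 0) ∧ ∀ x h, 0 < h → h < x → V (x + h) + V (x - h) - 2 * V x =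
      lam * ∫ s in (0:ℝ)..h, ((h - s : ℝ) : ℂ) * (((((x + s) ^ (2 / α - 2) : ℝ)) : ℂ) * V (x + s) +
        ((((x - s) ^ (2 / α - 2) : ℝ)) : ℂ) * V (x - s)) :=
  laplace_ode (fun x t => (Kker α x t : ℂ)) (fun x t => (Kx α x t : ℂ))
    (fun x t => (Ktd α x t : ℂ)) (fun x : ℝ => x ^ (2 / α - 2)) lam hlam (q_cont α)
    (fun x t hx ht => (Kker_dx α x t hα hx ht).ofReal_comp)
    (fun x t hx ht => by
      have := (Kker_dxx α x t hα hx ht).ofReal_comp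
      simpa only [Complex.ofReal_mul] using this)
    (fun x t hx ht => (Kker_dt α x t hα hx ht).ofReal_comp)
    (Complex.continuous_ofReal.comp_continuousOn (Ktd_cont α hα))
    (fun a b ha => by
      obtain ⟨M, hM⟩ := Kker_bound α a b hα ha
      exact ⟨M, fun x hx t ht => by
        rw [Complex.norm_real]; exact hM x hx t ht⟩)
    (fun x hx => by
      have := (Complex.continuous_ofReal.tendsto 0).comp (Kker_init α x hα hx)
      simpa [Function.comp_def] using this)
    V hV

lemma u_derivs (α : ℝ) (hα : 0 < α) (u : ℝ → ℝ → ℂ)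
    (hu2 : ContDiffOn ℝ 2 (fun p : ℝ × ℝ => u p.1 p.2) (Set.Ioi 0 ×ˢ Set.Ioi 0))
    (hpde : ∀ x t : ℝ, 0 < x → 0 < t →
      deriv (fun s => u x s) t =
        (x ^ (2 * (α - 1) / α) : ℝ) * iteratedDeriv 2 (fun y => u y t) x) :
    (∀ x t, 0 < x → 0 < t → HasDerivAt (fun y => u y t) (deriv (fun y => u y t) x) x) ∧
    (∀ x t, 0 < x → 0 < t → HasDerivAt (fun z => deriv (fun y => u y t) z)
      (((x ^ (2 / α - 2) : ℝ) : ℂ) * deriv (fun s => u x s) t) x) ∧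
    (∀ x t, 0 < x → 0 < t → HasDerivAt (fun s => u x s) (deriv (fun s => u x s) t) t) ∧
    ContinuousOn (fun p : ℝ × ℝ => deriv (fun s => u p.1 s) p.2) (Ioi 0 ×ˢ Ioi 0) := by
  have hop : IsOpen (Ioi (0:ℝ) ×ˢ Ioi (0:ℝ)) := isOpen_Ioi.prod isOpen_Ioi
  have hX : ∀ t, 0 < t → ContDiffOn ℝ 2 (fun y => u y t) (Ioi 0) := fun t ht =>
    hu2.comp (f := fun y : ℝ => (y, t)) (by fun_prop) (fun y hy => ⟨hy, ht⟩)
  have hT : ∀ x, 0 < x → ContDiffOn ℝ 2 (fun s => u x s) (Ioi 0) := fun x hx =>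
    hu2.comp (f := fun s : ℝ => (x, s)) (by fun_prop) (fun y hy => ⟨hx, hy⟩)
  refine ⟨fun x t hx ht => ?_, fun x t hx ht => ?_, fun x t hx ht => ?_, ?_⟩
  · exact (((hX t ht).differentiableOn (by norm_num)).differentiableAt (Ioi_mem_nhds hx)).hasDerivAt
  · have h2 : ContDiffOn ℝ 1 (deriv (fun y => u y t)) (Ioi 0) :=
      (hX t ht).deriv_of_isOpen isOpen_Ioi (by norm_num)
    have h3 := ((h2.differentiableOn (by norm_num)).differentiableAt (Ioi_mem_nhds hx)).hasDerivAt
    refine h3.congr_deriv ?_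
    rw [hpde x t hx ht, iteratedDeriv_succ, iteratedDeriv_one, ← mul_assoc, ← Complex.ofReal_mul,
      ← Real.rpow_add hx]
    have : 2 / α - 2 + 2 * (α - 1) / α = 0 := by field_simp; ring
    rw [this]; simp
  · exact (((hT x hx).differentiableOn (by norm_num)).differentiableAt (Ioi_mem_nhds ht)).hasDerivAt
  · have h := hu2.continuousOn_fderiv_of_isOpen hop (by norm_num)
    have h2 := h.clm_apply (continuousOn_const (c := ((0:ℝ), (1:ℝ))))
    refine h2.congr fun p hp => ?_
    have hd := ((hu2.differentiableOn (by norm_num)).differentiableAt (hop.mem_nhds hp)).hasFDerivAt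
    have hc : HasDerivAt (fun s : ℝ => (p.1, s)) ((0:ℝ), (1:ℝ)) p.2 :=
      (hasDerivAt_const p.2 p.1).prodMk (hasDerivAt_id p.2)
    exact (hd.comp_hasDerivAt p.2 hc).deriv

lemma K_intC (α x : ℝ) (hα : 0 < α) (hx : 0 < x) :
    IntegrableOn (fun t => (Kker α x t : ℂ)) (Ioi 0) := (Kker_integrable α x hα hx).ofReal

lemma Tt_eq_s8 (α t x : ℝ) (g : ℝ → ℂ) :
    Tt α t g x = ∫ s in Ioi (0:ℝ), (Kker α x s : ℂ) * (Ioi (0:ℝ)).indicator g (t - s) := by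
  unfold Tt
  rw [← integral_indicator measurableSet_Ioo, ← integral_indicator measurableSet_Ioi,
    ← integral_sub_left_eq_self _ volume t]
  congr 1
  ext s
  by_cases h1 : 0 < s <;> by_cases h2 : s < t <;>
    simp [indicator, h1, h2]

lemma Tt_cont_bdd (α x : ℝ) (hα : 0 < α) (hx : 0 < x) (g : ℝ → ℂ)
    (hgc : ContinuousOn g (Set.Ici 0)) (M : ℝ) (hM : ∀ t : ℝ, 0 ≤ t → ‖g t‖ ≤ M) :
    ContinuousOn (fun t => Tt α t g x) (Ioi 0) ∧ ∃ C, ∀ t, 0 < t → ‖Tt α t g x‖ ≤ C := by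
  have hM0 : 0 ≤ M := (norm_nonneg _).trans (hM 0 le_rfl)
  set G := (Ioi (0:ℝ)).indicator g with hG
  have hGb : ∀ r, ‖G r‖ ≤ M := by
    intro r
    by_cases h : 0 < r
    · simpa [hG, indicator, h] using hM r h.le
    · simpa [hG, indicator, h] using hM0
  have hGm : Measurable G := by
    rw [hG]
    have : G = (Ioi (0:ℝ)).piecewise g 0 := by
      rw [piecewise_eq_indicator]
    rw [← hG, this]
    exact ContinuousOn.measurable_piecewise (hgc.mono Ioi_subset_Ici_self) continuousOn_const measurableSet_Ioi
  have hGc : ∀ r, r ≠ 0 → ContinuousAt G r := by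
    intro r hr
    rcases lt_or_gt_of_ne hr with h | h
    · have : G =ᶠ[nhds r] fun _ => 0 := by
        filter_upwards [Iio_mem_nhds h] with y hy
        have : ¬ (0 < y) := not_lt.2 (le_of_lt hy)
        simp [hG, indicator, this]
      exact continuousAt_const.congr this.symm
    · have : G =ᶠ[nhds r] g := by
        filter_upwards [Ioi_mem_nhds h] with y hy
        have : 0 < y := hy
        simp [hG, indicator, this]
      exact (hgc.continuousAt (Ici_mem_nhds h)).congr this.symm
  have hK := K_intC α x hα hx
  have hKn : IntegrableOn (fun s => ‖(Kker α x s : ℂ)‖ * M) (Ioi 0) := hK.norm.mul_const M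
  have hbd : ∀ t s, ‖(Kker α x s : ℂ) * G (t - s)‖ ≤ ‖(Kker α x s : ℂ)‖ * M := fun t s => by
    rw [norm_mul]; exact mul_le_mul_of_nonneg_left (hGb _) (norm_nonneg _)
  simp only [Tt_eq_s8]
  constructor
  · intro t ht
    refine ContinuousAt.continuousWithinAt ?_
    refine continuousAt_of_dominated (bound := fun s => ‖(Kker α x s : ℂ)‖ * M) ?_ ?_ hKn ?_
    · exact Eventually.of_forall fun t' => hK.aestronglyMeasurable.mul
        (hGm.comp (measurable_const.sub measurable_id)).aestronglyMeasurable
    · exact Eventually.of_forall fun t' => Eventually.of_forall fun s => hbd t' s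
    · have : ∀ᵐ s ∂(volume.restrict (Ioi (0:ℝ))), s ≠ t := ae_restrict_of_ae (Measure.ae_ne volume t)
      filter_upwards [this] with s hs
      refine continuousAt_const.mul ?_
      exact ContinuousAt.comp (f := fun t' => t' - s) (g := G) (hGc _ (sub_ne_zero.2 hs.symm)) (by fun_prop)
  · refine ⟨∫ s in Ioi (0:ℝ), ‖(Kker α x s : ℂ)‖ * M, fun t ht => ?_⟩
    exact norm_integral_le_of_norm_le hKn (Eventually.of_forall fun s => hbd t s)

lemma expK_int (α x lam : ℝ) (hα : 0 < α) (hx : 0 < x) (hlam : 0 < lam) :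
    IntegrableOn (fun t => (Real.exp (-lam * t) : ℂ) * (Kker α x t : ℂ)) (Ioi 0) := by
  obtain ⟨M, hM⟩ := Kker_bound α x x hα hx
  refine integrableOn_exp_mul lam hlam _ M (fun t ht => ?_) (fun t ht => ?_)
  · exact (Kker_dt α x t hα hx ht).ofReal_comp.continuousAt.continuousWithinAt
  · rw [Complex.norm_real]; exact hM x ⟨le_rfl, le_rfl⟩ t ht

lemma Tt_laplace (α x lam : ℝ) (hα : 0 < α) (hx : 0 < x) (hlam : 0 < lam) (g : ℝ → ℂ)
    (hgc : ContinuousOn g (Set.Ici 0)) (M : ℝ) (hM : ∀ t : ℝ, 0 ≤ t → ‖g t‖ ≤ M) :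
    ∫ t in Ioi (0:ℝ), (Real.exp (-lam * t) : ℂ) * Tt α t g x =
      (∫ t in Ioi (0:ℝ), (Real.exp (-lam * t) : ℂ) * g t) *
        ∫ t in Ioi (0:ℝ), (Real.exp (-lam * t) : ℂ) * (Kker α x t : ℂ) := by
  have hg := integrableOn_exp_mul lam hlam g M (hgc.mono Ioi_subset_Ici_self) (fun t ht => hM t ht.le)
  have h := integral_posConvolution hg (expK_int α x lam hα hx hlam) (ContinuousLinearMap.mul ℝ ℂ)
  simp only [ContinuousLinearMap.mul_apply'] at h
  rw [← h]
  refine setIntegral_congr_fun measurableSet_Ioi fun t ht => ?_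
  beta_reduce
  have ht : 0 < t := ht
  rw [intervalIntegral.integral_of_le ht.le, integral_Ioc_eq_integral_Ioo, Tt, ← integral_const_mul]
  congr 1
  ext τ
  have : (Real.exp (-lam * t) : ℂ) = (Real.exp (-lam * τ) : ℂ) * (Real.exp (-lam * (t - τ)) : ℂ) := by
    rw [← Complex.ofReal_mul, ← Real.exp_add]; congr 2; ring
  rw [this]; ring

lemma V_limit (lam : ℝ) (hlam : 0 < lam) (u : ℝ → ℝ → ℂ) (M : ℝ)
    (hM : ∀ x t : ℝ, 0 ≤ x → 0 < t → ‖u x t‖ ≤ M)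
    (hc : ∀ x, 0 < x → ContinuousOn (u x) (Ioi 0)) (w : ℝ → ℂ) (l : Filter ℝ)
    [l.IsCountablyGenerated] (hl : ∀ᶠ x in l, 0 < x)
    (hw : ∀ t, 0 < t → Tendsto (fun x => u x t) l (nhds (w t))) :
    Tendsto (fun x => ∫ t in Ioi (0:ℝ), (Real.exp (-lam * t) : ℂ) * u x t) l
      (nhds (∫ t in Ioi (0:ℝ), (Real.exp (-lam * t) : ℂ) * w t)) := by
  have h1 : IntegrableOn (fun t => Real.exp (-lam * t) * M) (Ioi 0) :=
    (integrableOn_exp_mul_Ioi (by linarith : -lam < 0) 0).mul_const M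
  refine tendsto_integral_filter_of_dominated_convergence (fun t => Real.exp (-lam * t) * M) ?_ ?_ h1 ?_
  · filter_upwards [hl] with x hx
    exact (integrableOn_exp_mul lam hlam (u x) M (hc x hx) (fun t ht => hM x t hx.le ht)).aestronglyMeasurable
  · filter_upwards [hl] with x hx
    filter_upwards [ae_restrict_mem measurableSet_Ioi] with t ht
    rw [norm_mul, Complex.norm_real, Real.norm_eq_abs, abs_of_pos (Real.exp_pos _)]
    exact mul_le_mul_of_nonneg_left (hM x t hx.le ht) (Real.exp_pos _).le
  · filter_upwards [ae_restrict_mem measurableSet_Ioi] with t ht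
    exact (hw t ht).const_mul _

lemma id_int (q : ℝ → ℝ) (V : ℝ → ℂ) (hq : ContinuousOn q (Ioi 0)) (hV : ContinuousOn V (Ioi 0))
    (x h : ℝ) (hh : 0 < h) (hx : h < x) :
    IntervalIntegrable (fun s => ((h - s : ℝ) : ℂ) * ((q (x + s) : ℂ) * V (x + s) + (q (x - s) : ℂ) * V (x - s)))
      volume 0 h := by
  refine ContinuousOn.intervalIntegrable ?_
  rw [uIcc_of_le hh.le]
  have m1 : MapsTo (fun s => x + s) (Icc 0 h) (Ioi 0) := fun s hs => by
    have := hs.1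
    show 0 < x + s
    linarith
  have m2 : MapsTo (fun s => x - s) (Icc 0 h) (Ioi 0) := fun s hs => by
    have := hs.2
    show 0 < x - s
    linarith
  have c1 : ContinuousOn (fun s => x + s) (Icc 0 h) := by fun_prop
  have c2 : ContinuousOn (fun s => x - s) (Icc 0 h) := by fun_prop
  have hqC : ContinuousOn (fun x => (q x : ℂ)) (Ioi 0) := Complex.continuous_ofReal.comp_continuousOn hq
  have c3 : ContinuousOn (fun s : ℝ => ((h - s : ℝ) : ℂ)) (Icc 0 h) := by fun_prop
  exact c3.mul (((hqC.comp c1 m1).mul (hV.comp c1 m1)).add ((hqC.comp c2 m2).mul (hV.comp c2 m2)))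

lemma combine (q : ℝ → ℝ) (lam : ℝ) (hlam : 0 < lam) (hq : ∀ x, 0 < x → 0 < q x)
    (hqc : ContinuousOn q (Ioi 0)) (U V : ℝ → ℂ) (G : ℂ)
    (cU : ContinuousOn U (Ioi 0)) (cV : ContinuousOn V (Ioi 0))
    (iU : ∀ x h, 0 < h → h < x → U (x + h) + U (x - h) - 2 * U x =
      lam * ∫ s in (0:ℝ)..h, ((h - s : ℝ) : ℂ) * ((q (x + s) : ℂ) * U (x + s) + (q (x - s) : ℂ) * U (x - s)))
    (iV : ∀ x h, 0 < h → h < x → V (x + h) + V (x - h) - 2 * V x =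
      lam * ∫ s in (0:ℝ)..h, ((h - s : ℝ) : ℂ) * ((q (x + s) : ℂ) * V (x + s) + (q (x - s) : ℂ) * V (x - s)))
    (lU0 : Tendsto U (nhdsWithin 0 (Ioi 0)) (nhds G)) (lUi : Tendsto U atTop (nhds 0))
    (lV0 : Tendsto V (nhdsWithin 0 (Ioi 0)) (nhds 1)) (lVi : Tendsto V atTop (nhds 0)) :
    ∀ x, 0 < x → U x = G * V x := by
  intro x hx
  refine sub_eq_zero.1 (maxp (fun x => U x - G * V x) q lam hlam hq hqc
    (cU.sub (continuousOn_const.mul cV)) ?_ ?_ ?_ x hx)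
  · simpa using lU0.sub (lV0.const_mul G)
  · simpa using lUi.sub (lVi.const_mul G)
  · intro x h hh hx
    have e : ∀ s, ((h - s : ℝ) : ℂ) * ((q (x + s) : ℂ) * (U (x + s) - G * V (x + s)) +
          (q (x - s) : ℂ) * (U (x - s) - G * V (x - s))) =
        ((h - s : ℝ) : ℂ) * ((q (x + s) : ℂ) * U (x + s) + (q (x - s) : ℂ) * U (x - s)) -
        G * (((h - s : ℝ) : ℂ) * ((q (x + s) : ℂ) * V (x + s) + (q (x - s) : ℂ) * V (x - s))) := by
      intro s; ring
    simp only [e]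
    rw [intervalIntegral.integral_sub (id_int q U hqc cU x h hh hx)
      ((id_int q V hqc cV x h hh hx).const_mul G), intervalIntegral.integral_const_mul]
    linear_combination iU x h hh hx - G * iV x h hh hx

theorem stmt8 (α : ℝ) (hα : 0 < α)
    (g : ℝ → ℂ) (hgc : ContinuousOn g (Set.Ici 0))
    (hgb : ∃ M : ℝ, ∀ t : ℝ, 0 ≤ t → ‖g t‖ ≤ M)
    (u : ℝ → ℝ → ℂ)
    (hub : ∃ M : ℝ, ∀ x t : ℝ, 0 ≤ x → 0 < t → ‖u x t‖ ≤ M)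
    (huc : ContinuousOn (fun p : ℝ × ℝ => u p.1 p.2) (Set.Ici 0 ×ˢ Set.Ioi 0))
    (hu2 : ContDiffOn ℝ 2 (fun p : ℝ × ℝ => u p.1 p.2) (Set.Ioi 0 ×ˢ Set.Ioi 0))
    (hpde : ∀ x t : ℝ, 0 < x → 0 < t →
      deriv (fun s => u x s) t =
        (x ^ (2 * (α - 1) / α) : ℝ) * iteratedDeriv 2 (fun y => u y t) x)
    (hbdry : ∀ t : ℝ, 0 < t → u 0 t = g t)
    (hinit : ∀ x : ℝ, 0 < x →
      Tendsto (fun t => u x t) (nhdsWithin 0 (Set.Ioi 0)) (nhds 0))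
    (hinf : ∀ t : ℝ, 0 < t → Tendsto (fun x => u x t) atTop (nhds 0)) :
    ∀ x t : ℝ, 0 < x → 0 < t → u x t = Tt α t g x := by
  obtain ⟨Mg, hMg⟩ := hgb
  obtain ⟨Mu, hMu⟩ := hub
  obtain ⟨d1, d2, d3, d4⟩ := u_derivs α hα u hu2 hpde
  have huct : ∀ x, 0 < x → ContinuousOn (u x) (Ioi 0) := fun x hx t ht =>
    (d3 x t hx ht).continuousAt.continuousWithinAt
  have key : ∀ lam : ℝ, 0 < lam → ∀ x, 0 < x →
      ∫ t in Ioi (0:ℝ), (Real.exp (-lam * t) : ℂ) * u x t =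
      (∫ t in Ioi (0:ℝ), (Real.exp (-lam * t) : ℂ) * g t) *
        ∫ t in Ioi (0:ℝ), (Real.exp (-lam * t) : ℂ) * (Kker α x t : ℂ) := by
    intro lam hlam
    obtain ⟨cU, iU⟩ := laplace_ode u (fun x t => deriv (fun y => u y t) x)
      (fun x t => deriv (fun s => u x s) t) (fun x : ℝ => x ^ (2 / α - 2)) lam hlam (q_cont α)
      d1 d2 d3 d4 (fun a b ha => ⟨Mu, fun x hx t ht => hMu x t (ha.le.trans hx.1) ht⟩) hinit
      (fun x => ∫ t in Ioi (0:ℝ), (Real.exp (-lam * t) : ℂ) * u x t) (fun x => rfl)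
    obtain ⟨cK, iK⟩ := K_ode α lam hα hlam
      (fun x => ∫ t in Ioi (0:ℝ), (Real.exp (-lam * t) : ℂ) * (Kker α x t : ℂ)) (fun x => rfl)
    have lU0 := V_limit lam hlam u Mu hMu huct g (nhdsWithin 0 (Ioi 0)) self_mem_nhdsWithin
      (fun t ht => by
        have h := (huc (0, t) ⟨self_mem_Ici, ht⟩).tendsto
        have hm : Tendsto (fun x : ℝ => (x, t)) (nhdsWithin 0 (Ioi 0))
            (nhdsWithin (0, t) (Ici 0 ×ˢ Ioi 0)) := by
          refine tendsto_nhdsWithin_iff.2 ⟨?_, ?_⟩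
          · exact ((by fun_prop : Continuous fun x : ℝ => (x, t)).tendsto 0).mono_left nhdsWithin_le_nhds
          · filter_upwards [self_mem_nhdsWithin] with x hx
            exact ⟨Ioi_subset_Ici_self hx, ht⟩
        have h3 := h.comp hm
        simpa only [Function.comp_def, hbdry t ht] using h3)
    have lUi := V_limit lam hlam u Mu hMu huct (fun _ => 0) atTop (eventually_gt_atTop 0) hinf
    simp only [mul_zero, integral_zero] at lUi
    obtain ⟨p0, pi⟩ := prof_laplace_tendsto α lam hα hlam
    have lK0 : Tendsto (fun x => ∫ t in Ioi (0:ℝ), (Real.exp (-lam * t) : ℂ) * (Kker α x t : ℂ))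
        (nhdsWithin 0 (Ioi 0)) (nhds 1) := by
      have := (Complex.continuous_ofReal.tendsto 1).comp p0
      rw [Complex.ofReal_one] at this
      refine this.congr' ?_
      filter_upwards [self_mem_nhdsWithin] with x hx
      exact (Kker_laplace α x lam hα hx).symm
    have lKi : Tendsto (fun x => ∫ t in Ioi (0:ℝ), (Real.exp (-lam * t) : ℂ) * (Kker α x t : ℂ))
        atTop (nhds 0) := by
      have := (Complex.continuous_ofReal.tendsto 0).comp pi
      rw [Complex.ofReal_zero] at this
      refine this.congr' ?_
      filter_upwards [eventually_gt_atTop 0] with x hx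
      exact (Kker_laplace α x lam hα hx).symm
    exact combine (fun x : ℝ => x ^ (2 / α - 2)) lam hlam (fun x hx => Real.rpow_pos_of_pos hx _) (q_cont α)
      _ _ _ cU cK iU iK lU0 lUi lK0 lKi
  intro x t hx
  obtain ⟨cT, C, hC⟩ := Tt_cont_bdd α x hα hx g hgc Mg hMg
  have := laplace_inj (fun t => u x t - Tt α t g x) ((huct x hx).sub cT) (Mu + C)
    (fun t ht => (norm_sub_le _ _).trans (add_le_add (hMu x t hx.le ht) (hC t ht)))
    (fun lam hlam => by
      simp only [mul_sub]
      rw [integral_sub (integrableOn_exp_mul lam hlam (u x) Mu (huct x hx) (fun t ht => hMu x t hx.le ht))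
        (integrableOn_exp_mul lam hlam _ C cT hC), key lam hlam x hx,
        Tt_laplace α x lam hα hx hlam g hgc Mg hMg, sub_self]) t
  exact fun ht => sub_eq_zero.1 (this ht)
end

section
/- Fix α > 0 and t > 0. Let g : (0,t) → ℂ be measurable with ∫_0^t |g(τ)|² τ^α dτ < ∞. If ∫_0^t (t-τ)^{-(α/2+1)} exp(-z/(t-τ)) g(τ) τ^α dτ = 0 for every z ∈ ℂ with Re z > 0, then g = 0 almost everywhere on (0,t). -/
open MeasureTheory Filter Set

lemma aux_bound (a s : ℝ) (ha : 0 < a) (hs : 0 < s) :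
    s ^ (-a) * Real.exp (-s⁻¹) ≤ a ^ a := by
  have h1 : s⁻¹ ≤ a * Real.exp (s⁻¹ / a) := by
    have := Real.add_one_le_exp (s⁻¹ / a)
    have h2 : s⁻¹ / a ≤ Real.exp (s⁻¹ / a) := by linarith
    rw [div_le_iff₀ ha] at h2
    linarith
  have h3 : (s⁻¹) ^ a ≤ a ^ a * Real.exp (s⁻¹) := by
    calc (s⁻¹) ^ a ≤ (a * Real.exp (s⁻¹ / a)) ^ a :=
          Real.rpow_le_rpow (by positivity) h1 ha.le
      _ = a ^ a * Real.exp (s⁻¹) := by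
          rw [Real.mul_rpow ha.le (Real.exp_pos _).le, ← Real.exp_mul]
          congr 2
          field_simp
  rw [Real.rpow_neg hs.le, ← Real.inv_rpow hs.le, Real.exp_neg]
  rw [← div_eq_mul_inv, div_le_iff₀ (Real.exp_pos _)]
  exact h3

lemma aux_glue_inj {t x y : ℝ} (hx : x ≤ t) (hy : y ≤ t)
    (h : expNegInvGlue (t - x) = expNegInvGlue (t - y)) : x = y := by
  rcases hx.lt_or_eq with hx | rfl <;> rcases hy.lt_or_eq with hy | rfl
  · have h1 : ¬ (t - x ≤ 0) := by linarith
    have h2 : ¬ (t - y ≤ 0) := by linarith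
    simp only [expNegInvGlue, h1, h2, if_false, Real.exp_eq_exp, neg_inj, inv_inj] at h
    linarith
  · have := expNegInvGlue.pos_of_pos (x := y - x) (by linarith)
    rw [h] at this
    simp [expNegInvGlue] at this
  · have := expNegInvGlue.pos_of_pos (x := x - y) (by linarith)
    rw [← h] at this
    simp [expNegInvGlue] at this
  · rfl

lemma aux_dense {t : ℝ} (f : ℝ → ℝ) (hf : Continuous f) (ε : ℝ) (hε : 0 < ε) :
    ∃ p : Polynomial ℝ, ∀ x ∈ Icc 0 t, |p.eval (expNegInvGlue (t - x)) - f x| < ε := by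
  let X : C(Icc (0:ℝ) t, ℝ) :=
    ⟨fun x => expNegInvGlue (t - x), by
      exact (expNegInvGlue.contDiff (n := 0)).continuous.comp (by fun_prop)⟩
  have hsep : (Algebra.adjoin ℝ {X}).SeparatesPoints := by
    intro x y hxy
    refine ⟨X, ⟨X, Algebra.subset_adjoin rfl, rfl⟩, fun h => hxy ?_⟩
    exact Subtype.ext (aux_glue_inj x.2.2 y.2.2 h)
  obtain ⟨⟨q, hq⟩, hq2⟩ := ContinuousMap.exists_mem_subalgebra_near_continuous_of_separatesPoints
    (Algebra.adjoin ℝ {X}) hsep (fun x => f x) (by fun_prop) ε hε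
  rw [Algebra.adjoin_singleton_eq_range_aeval] at hq
  obtain ⟨p, rfl⟩ := hq
  refine ⟨p, fun x hx => ?_⟩
  have := hq2 ⟨x, hx⟩
  simpa [Polynomial.aeval_continuousMap_apply, X, Real.norm_eq_abs] using this

theorem stmt13 (α t : ℝ) (hα : 0 < α) (ht : 0 < t)
    (g : ℝ → ℂ) (hg : Measurable g)
    (hint : IntegrableOn (fun τ => ‖g τ‖ ^ 2 * τ ^ α) (Set.Ioo 0 t))
    (hzero : ∀ z : ℂ, 0 < z.re →
      ∫ τ in Set.Ioo (0 : ℝ) t,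
        (((t - τ) ^ (-(α / 2 + 1)) : ℝ) : ℂ) *
          Complex.exp (-z / (((t - τ : ℝ)) : ℂ)) * g τ * ((τ ^ α : ℝ) : ℂ) = 0) :
    ∀ᵐ τ ∂(volume.restrict (Set.Ioo 0 t)), g τ = 0 := by
  set a := α / 2 + 1 with ha
  have ha0 : 0 < a := by positivity
  let F : ℝ → ℂ := fun τ => (((t - τ) ^ (-a) : ℝ) : ℂ) *
          Complex.exp (-1 / (((t - τ : ℝ)) : ℂ)) * g τ * ((τ ^ α : ℝ) : ℂ)
  have hFm : Measurable F := by fun_prop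
  have hF : IntegrableOn F (Ioo 0 t) := by
    have hc : IntegrableOn (fun _ : ℝ => t ^ α) (Ioo 0 t) := by
      apply integrableOn_const <;> simp
    have := (hint.add hc).const_mul (a ^ a)
    refine this.mono' hFm.aestronglyMeasurable ?_
    filter_upwards [ae_restrict_mem measurableSet_Ioo] with τ hτ
    have hs : 0 < t - τ := by linarith [hτ.2]
    have hb := aux_bound a (t - τ) ha0 hs
    have e : ‖F τ‖ = ((t - τ) ^ (-a) * Real.exp (-(t-τ)⁻¹)) * (‖g τ‖ * τ ^ α) := by
      have h1 : Complex.exp (-1 / (((t - τ : ℝ)) : ℂ)) = ((Real.exp (-(t-τ)⁻¹) : ℝ) : ℂ) := by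
        push_cast
        congr 1
        ring
      simp only [F, h1, norm_mul, Complex.norm_real, Real.norm_eq_abs, Real.abs_exp]
      rw [abs_of_nonneg (Real.rpow_nonneg hs.le _), abs_of_nonneg (Real.rpow_nonneg hτ.1.le _)]
      ring
    rw [e]
    have hp : 0 ≤ τ ^ α := Real.rpow_nonneg hτ.1.le _
    have hle : τ ^ α ≤ t ^ α := Real.rpow_le_rpow hτ.1.le hτ.2.le hα.le
    have h2 : ‖g τ‖ * τ ^ α ≤ ‖g τ‖ ^ 2 * τ ^ α + t ^ α := by
      nlinarith [mul_nonneg hp (sq_nonneg (‖g τ‖ - 1)), mul_nonneg hp (sq_nonneg (‖g τ‖))]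
    exact mul_le_mul hb h2 (by positivity) (by positivity)
  have hXb : ∀ τ, ‖expNegInvGlue (t - τ)‖ ≤ 1 := by
    intro τ
    rw [Real.norm_of_nonneg (expNegInvGlue.nonneg _)]
    unfold expNegInvGlue
    split_ifs with h
    · simp
    · rw [Real.exp_le_one_iff]
      have : 0 < (t - τ)⁻¹ := by rw [inv_pos]; linarith
      linarith
  have hXc : Continuous (fun τ : ℝ => expNegInvGlue (t - τ)) :=
    (expNegInvGlue.contDiff (n := 0)).continuous.comp (by fun_prop)
  have hpow : ∀ n : ℕ, ∫ τ in Ioo 0 t, (expNegInvGlue (t - τ) ^ n) • F τ = 0 := by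
    intro n
    rw [← hzero (n + 1) (by simp; positivity)]
    refine setIntegral_congr_fun measurableSet_Ioo fun τ hτ => ?_
    have hs : ¬ (t - τ ≤ 0) := by linarith [hτ.2]
    simp only [expNegInvGlue, hs, if_false, F, Complex.real_smul]
    have : Complex.exp (-(n + 1) / (((t - τ : ℝ)) : ℂ))
        = ((Real.exp (-(t-τ)⁻¹) ^ n : ℝ) : ℂ) * Complex.exp (-1 / (((t - τ : ℝ)) : ℂ)) := by
      rw [← Real.exp_nat_mul, Complex.ofReal_exp, ← Complex.exp_add]
      congr 1
      push_cast
      ring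
    rw [this]
    ring
  have hpowi : ∀ n : ℕ, IntegrableOn (fun τ => (expNegInvGlue (t - τ) ^ n) • F τ) (Ioo 0 t) := by
    intro n
    refine Integrable.bdd_smul hF 1 (hXc.pow n).aestronglyMeasurable ?_
    refine ae_of_all _ fun τ => ?_
    rw [Pi.pow_apply, norm_pow]
    exact pow_le_one₀ (norm_nonneg _) (hXb τ)
  have hpoly : ∀ p : Polynomial ℝ,
      IntegrableOn (fun τ => (p.eval (expNegInvGlue (t - τ))) • F τ) (Ioo 0 t) ∧
      ∫ τ in Ioo 0 t, (p.eval (expNegInvGlue (t - τ))) • F τ = 0 := by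
    intro p
    induction p using Polynomial.induction_on' with
    | add p q hp hq =>
      simp only [Polynomial.eval_add, add_smul]
      refine ⟨hp.1.add hq.1, ?_⟩
      rw [integral_add hp.1 hq.1, hp.2, hq.2, add_zero]
    | monomial n c =>
      simp only [Polynomial.eval_monomial, mul_smul]
      refine ⟨(hpowi n).smul c, ?_⟩
      rw [integral_smul, hpow, smul_zero]
  have hmain : ∀ᵐ τ, τ ∈ Ioo 0 t → F τ = 0 := by
    refine isOpen_Ioo.ae_eq_zero_of_integral_contDiff_smul_eq_zero hF.locallyIntegrableOn ?_
    intro φ hφ hφc hφs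
    have hφcont := hφ.continuous
    obtain ⟨C, hC⟩ := hφcont.bounded_above_of_compact_support hφc
    have hφi : IntegrableOn (fun τ => φ τ • F τ) (Ioo 0 t) :=
      Integrable.bdd_smul hF C hφcont.aestronglyMeasurable (ae_of_all _ hC)
    have hset : ∫ τ, φ τ • F τ = ∫ τ in Ioo 0 t, φ τ • F τ := by
      symm
      apply setIntegral_eq_integral_of_forall_compl_eq_zero
      intro x hx
      have : φ x = 0 := by
        by_contra h
        exact hx (hφs (subset_tsupport _ h))
      simp [this]
    rw [hset]
    set M := ∫ τ in Ioo 0 t, ‖F τ‖ with hM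
    have hM0 : 0 ≤ M := integral_nonneg fun _ => norm_nonneg _
    have key : ∀ ε > 0, ‖∫ τ in Ioo 0 t, φ τ • F τ‖ ≤ ε * M := by
      intro ε hε
      obtain ⟨p, hp⟩ := aux_dense (t := t) φ hφcont ε hε
      have : ∫ τ in Ioo 0 t, φ τ • F τ =
          ∫ τ in Ioo 0 t, (φ τ • F τ - (p.eval (expNegInvGlue (t - τ))) • F τ) := by
        rw [integral_sub hφi (hpoly p).1, (hpoly p).2, sub_zero]
      rw [this, hM, ← integral_const_mul]
      refine norm_integral_le_of_norm_le (hF.norm.const_mul ε) ?_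
      filter_upwards [ae_restrict_mem measurableSet_Ioo] with τ hτ
      rw [← sub_smul, norm_smul, Real.norm_eq_abs, abs_sub_comm]
      exact mul_le_mul_of_nonneg_right (hp τ (Ioo_subset_Icc_self hτ)).le (norm_nonneg _)
    rw [← norm_le_zero_iff]
    refine le_of_forall_pos_le_add fun δ hδ => ?_
    refine (key (δ / (M + 1)) (by positivity)).trans ?_
    rw [zero_add, div_mul_eq_mul_div, div_le_iff₀ (by positivity)]
    nlinarith
  rw [ae_restrict_iff' measurableSet_Ioo]
  filter_upwards [hmain] with τ h hτ
  have h0 := h hτ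
  have h1 : (t - τ) ^ (-a) ≠ 0 := (Real.rpow_pos_of_pos (by linarith [hτ.2]) _).ne'
  have h2 : τ ^ α ≠ 0 := (Real.rpow_pos_of_pos hτ.1 _).ne'
  simp only [F, mul_eq_zero, Complex.exp_ne_zero, Complex.ofReal_eq_zero, h1, h2, or_false,
    false_or] at h0
  exact h0
end
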